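/- arXiv:1409.1691 — 3 statements merged into one kernel-verified Lean document; each statement's English description precedes it below -/
import Mathlib

section
/- Let (V,{m_n}) be an A_∞ algebra over a field of characteristic 0 and let a ∈ V be homogeneous of degree k with m_1(a) = 0. Then the maps θ_n : V^{⊗n} → V defined for homogeneous v_1,…,v_n by θ_n(v_1,…,v_n) := Σ_{p=0}^{n} (−1)^{k(|v_1|+⋯+|v_p|)} m_{n+1}(v_1,…,v_p, a, v_{p+1},…,v_n) form a strong homotopy derivation of degree k+1 of (V,{m_n}). -/
/-!
STATEMENT 5.  Strong homotopy inner derivations of `A_∞` algebras.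

A ℤ-graded vector space is a vector space `V` with an internal grading
`ℬ : ℤ → Submodule 𝕜 V`; an `A_∞` algebra structure is a family of multilinear maps
`m_n` of degree `+1` satisfying the `A_∞` relations on homogeneous elements, with the
usual Koszul signs.  The maps `θ_n` multiply by signs depending on the degrees of their
homogeneous arguments, so their values are given by an explicit function of the degrees.
-/

open Finset

namespace Stmt5

variable {𝕜 V : Type} [Field 𝕜] [AddCommGroup V] [Module 𝕜 V]

/-- The tuple obtained from `v` by replacing the `s` consecutive slots starting at the
(0-indexed) position `i` by the single entry `w`. -/
def insTup (v : ℕ → V) (i s : ℕ) (w : V) : ℕ → V := fun t =>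
  if t < i then v t else if t = i then w else v (t + s - 1)

/-- The corresponding tuple of degrees. -/
def insDeg (d : ℕ → ℤ) (i s : ℕ) (w : ℤ) : ℕ → ℤ := fun t =>
  if t < i then d t else if t = i then w else d (t + s - 1)

variable (𝕜)

/-- The `A_∞` relations for degree-one operations `{m_n}` (`n ≥ 1`) on homogeneous
elements:  for `n ≥ 1` and `v t ∈ ℬ (d t)`,
`Σ_{r+s=n+1} Σ_{i=0}^{r−1} (−1)^{d_0+⋯+d_{i−1}} m_r(v₁,…,v_i, m_s(v_{i+1},…),…,v_n) = 0`. -/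
def AInftyRel (ℬ : ℤ → Submodule 𝕜 V)
    (m : ∀ n : ℕ, MultilinearMap 𝕜 (fun _ : Fin n => V) V) : Prop :=
  ∀ n : ℕ, 1 ≤ n → ∀ (d : ℕ → ℤ) (v : ℕ → V), (∀ t, v t ∈ ℬ (d t)) →
    ∑ s ∈ Icc 1 n, ∑ i ∈ range (n + 1 - s),
      ((-1 : 𝕜) ^ (∑ t ∈ range i, d t)) •
        m (n + 1 - s) (fun j => insTup v i s (m s fun u => v (i + (u : ℕ))) (j : ℕ)) = 0

/-- The map `θ_q(v₁,…,v_q) = Σ_{p=0}^{q} (−1)^{k(|v₁|+⋯+|v_p|)} m_{q+1}(v₁,…,v_p,a,v_{p+1},…,v_q)`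
evaluated on a homogeneous tuple with degrees `d`. -/
noncomputable def innerVal (m : ∀ n : ℕ, MultilinearMap 𝕜 (fun _ : Fin n => V) V)
    (a : V) (k : ℤ) (q : ℕ) (d : ℕ → ℤ) (v : ℕ → V) : V :=
  ∑ p ∈ range (q + 1),
    ((-1 : 𝕜) ^ (k * ∑ t ∈ range p, d t)) •
      m (q + 1) (fun j => if (j : ℕ) < p then v (j : ℕ)
        else if (j : ℕ) = p then a else v ((j : ℕ) - 1))

end Stmt5

/-!
Insert `a` in slot `p` of `(v₁, …, v_q)`, write down the `A_∞` relation of the resulting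
`(q + 1)`-tuple, and sum over `p` with weights `(-1)^(k (|v₁| + ⋯ + |v_p|))`. In each term `a` lies
either outside the block fed to the inner operation or inside it. The terms of the first kind add up
to `θ_r ∘ m_s` and those of the second kind to `m_r ∘ θ_s`, where now also `s = 0` occurs, with
`θ_0 = m_1(a)`. Hence the failure of `θ` to be a strong homotopy derivation is, up to sign, the
insertion of `m_1(a)`, which vanishes when `m_1(a) = 0`.
-/

namespace Stmt5

section Reindexing

variable {M : Type*} [AddCommMonoid M]

lemma sum_Icc_one_eq_sum_range (n : ℕ) (f : ℕ → M) :
    ∑ s ∈ Icc 1 n, f s = ∑ s ∈ range n, f (s + 1) := by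
  rw [range_eq_Ico, sum_Ico_add', zero_add, Ico_add_one_right_eq_Icc]

lemma sum_range_split_block {N i : ℕ} (s : ℕ) (hi : i ≤ N) (g : ℕ → M) :
    ∑ p ∈ range (N + s), g p =
      ∑ p ∈ range i, g p + ∑ p ∈ range s, g (i + p) + ∑ p ∈ range (N - i), g (i + s + p) := by
  rw [show N + s = i + s + (N - i) by omega, sum_range_add, sum_range_add]

/- The outer index on the right is the position of the block after slot `p` has been deleted, and
the inner index is the position of slot `p` after the block has been contracted to one entry. -/
lemma sum_slots_outside_block (N : ℕ) {s : ℕ} (hs : 1 ≤ s) (G : ℕ → ℕ → M) :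
    ∑ i ∈ range (N + 1), (∑ p ∈ range i, G p i + ∑ p ∈ range (N - i), G (i + s + p) i) =
      ∑ i ∈ range N, ∑ p ∈ range (N + 1),
        if p ≤ i then G p (i + 1) else G (p + s - 1) i := by
  have split_at (i : ℕ) (hi : i ∈ range N) :
      ∑ p ∈ range (N + 1), (if p ≤ i then G p (i + 1) else G (p + s - 1) i) =
        ∑ p ∈ range (i + 1), G p (i + 1) + ∑ p ∈ range (N - i), G (i + s + p) i := by
    have hi := mem_range.1 hi
    rw [show N + 1 = i + 1 + (N - i) by omega, sum_range_add]
    congr 1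
    · exact sum_congr rfl fun p hp => if_pos (Nat.lt_succ_iff.1 (mem_range.1 hp))
    · refine sum_congr rfl fun p _ => ?_
      rw [if_neg (by omega), show i + 1 + p + s - 1 = i + s + p by omega]
  rw [sum_congr rfl split_at, sum_add_distrib, sum_add_distrib,
    sum_range_succ' (fun i => ∑ p ∈ range i, G p i),
    sum_range_succ (fun i => ∑ p ∈ range (N - i), G (i + s + p) i)]
  simp only [range_zero, sum_empty, add_zero, Nat.sub_self]

lemma sum_slots_blocks (q : ℕ) (G : ℕ → ℕ → ℕ → M) :
    ∑ p ∈ range (q + 1), ∑ s ∈ Icc 1 (q + 1), ∑ i ∈ range (q + 2 - s), G p s i =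
      ∑ s ∈ Icc 1 q, ∑ i ∈ range (q + 1 - s), ∑ p ∈ range (q + 1 - s + 1),
          (if p ≤ i then G p s (i + 1) else G (p + s - 1) s i) +
        ∑ s ∈ range (q + 1), ∑ i ∈ range (q + 1 - s), ∑ p ∈ range (s + 1), G (i + p) (s + 1) i := by
  have split_block (s : ℕ) (hs : s ∈ Icc 1 (q + 1)) :
      ∑ p ∈ range (q + 1), ∑ i ∈ range (q + 2 - s), G p s i =
        ∑ i ∈ range (q + 1 - s), ∑ p ∈ range (q + 1 - s + 1),
            (if p ≤ i then G p s (i + 1) else G (p + s - 1) s i) +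
          ∑ i ∈ range (q + 2 - s), ∑ p ∈ range s, G (i + p) s i := by
    obtain ⟨hs, hsq⟩ := mem_Icc.1 hs
    obtain ⟨N, hN⟩ := Nat.exists_eq_add_of_le' hsq
    rw [show q + 1 - s = N by omega, show q + 2 - s = N + 1 by omega, hN, sum_comm,
      ← sum_slots_outside_block N hs fun p i => G p s i, ← sum_add_distrib]
    refine sum_congr rfl fun i hi => ?_
    rw [sum_range_split_block s (Nat.lt_succ_iff.1 (mem_range.1 hi)), add_right_comm]
  rw [sum_comm, sum_congr rfl split_block, sum_add_distrib, sum_Icc_succ_top (by omega),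
    sum_Icc_one_eq_sum_range (q + 1)
      fun s => ∑ i ∈ range (q + 2 - s), ∑ p ∈ range s, G (i + p) s i]
  simp only [Nat.sub_self, range_zero, sum_empty, add_zero, Nat.reduceSubDiff]

end Reindexing

section Signs

variable {K M : Type*} [DivisionRing K] [AddCommGroup M] [Module K M]

lemma neg_one_zpow_eq_of_even_sub {a b : ℤ} (h : Even (a - b)) : (-1 : K) ^ a = (-1) ^ b := by
  rw [← sub_add_cancel a b, zpow_add₀ (by simp), h.neg_one_zpow, one_mul]

lemma neg_one_zpow_smul_smul (a b : ℤ) (x : M) :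
    (-1 : K) ^ a • (-1 : K) ^ b • x = (-1 : K) ^ (a + b) • x := by
  rw [smul_smul, zpow_add₀ (by simp)]

lemma neg_neg_one_zpow_smul (a : ℤ) (x : M) : -((-1 : K) ^ a • x) = (-1 : K) ^ (a + 1) • x := by
  rw [zpow_add_one₀ (by simp), mul_neg_one, neg_smul]

end Signs

section Tuples

variable {V : Type} (v : ℕ → V) (a w : V)

lemma insTup_insTup_of_le {p i : ℕ} (s : ℕ) (hpi : p ≤ i) :
    insTup (insTup v p 0 a) (i + 1) s w = insTup (insTup v i s w) p 0 a := by
  ext t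
  grind [insTup]

lemma insTup_insTup_of_lt {p s i : ℕ} (hs : 1 ≤ s) (hip : i < p) :
    insTup (insTup v (p + s - 1) 0 a) i s w = insTup (insTup v i s w) p 0 a := by
  ext t
  grind [insTup]

lemma insTup_insTup_add {p s : ℕ} (i : ℕ) (hps : p ≤ s) :
    insTup (insTup v (i + p) 0 a) i (s + 1) w = insTup v i s w := by
  ext t
  grind [insTup]

lemma insTup_zero_add_one {p t : ℕ} (h : p ≤ t) : insTup v p 0 a (t + 1) = v t := by
  grind [insTup]

lemma insTup_of_lt {p t : ℕ} (s : ℕ) (h : t < p) : insTup v p s a t = v t :=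
  if_pos h

lemma insTup_add_add (i p u : ℕ) :
    insTup v (i + p) 0 a (i + u) = insTup (fun u => v (i + u)) p 0 a u := by
  grind [insTup]

variable [AddCommGroup V]

lemma insTup_eq_update (s : ℕ) {i n : ℕ} (hi : i < n) :
    (fun j : Fin n => insTup v i s w j) =
      Function.update (fun j : Fin n => insTup v i s 0 j) ⟨i, hi⟩ w := by
  ext j
  simp only [insTup, Function.update_apply, Fin.ext_iff]
  grind

variable {R M : Type*} [CommSemiring R] [Module R V] [AddCommMonoid M] [Module R M]

lemma map_insTup_eq_toLinearMap {n i : ℕ} (f : MultilinearMap R (fun _ : Fin n => V) M) (s : ℕ)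
    (hi : i < n) :
    f (fun j => insTup v i s w j) = f.toLinearMap (fun j => insTup v i s 0 j) ⟨i, hi⟩ w := by
  rw [insTup_eq_update v w s hi, MultilinearMap.toLinearMap_apply]

lemma map_insTup_zero {n i : ℕ} (f : MultilinearMap R (fun _ : Fin n => V) M) (s : ℕ)
    (hi : i < n) : f (fun j => insTup v i s 0 j) = 0 := by
  rw [map_insTup_eq_toLinearMap v 0 f s hi, map_zero]

lemma map_insTup_sum_smul {ι : Type*} {n i : ℕ} (f : MultilinearMap R (fun _ : Fin n => V) M)
    (s : ℕ) (hi : i < n) (S : Finset ι) (c : ι → R) (x : ι → V) :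
    f (fun j => insTup v i s (∑ p ∈ S, c p • x p) j) =
      ∑ p ∈ S, c p • f (fun j => insTup v i s (x p) j) := by
  simp only [map_insTup_eq_toLinearMap v _ f s hi, map_sum, map_smul]

lemma insTup_mem {ℬ : ℤ → Submodule R V} {d : ℕ → ℤ} {k : ℤ} {v : ℕ → V} {a : V}
    (hv : ∀ t, v t ∈ ℬ (d t)) (ha : a ∈ ℬ k) (p s t : ℕ) :
    insTup v p s a t ∈ ℬ (insDeg d p s k t) := by
  unfold insTup insDeg
  split_ifs
  exacts [hv _, ha, hv _]

end Tuples

section Degrees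

variable (d : ℕ → ℤ) (w : ℤ)

lemma sum_insDeg_of_le (s : ℕ) {i n : ℕ} (h : n ≤ i) :
    ∑ t ∈ range n, insDeg d i s w t = ∑ t ∈ range n, d t :=
  sum_congr rfl fun _ ht => if_pos ((mem_range.1 ht).trans_le h)

lemma sum_insDeg_add (i s r : ℕ) :
    ∑ t ∈ range (i + 1 + r), insDeg d i s w t + ∑ u ∈ range s, d (i + u) =
      ∑ t ∈ range (i + s + r), d t + w := by
  have insDeg_self : insDeg d i s w i = w := by simp [insDeg]
  have insDeg_after (t : ℕ) : insDeg d i s w (i + 1 + t) = d (i + s + t) := by grind [insDeg]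
  rw [sum_range_add, sum_range_succ, sum_insDeg_of_le d w s le_rfl, insDeg_self,
    sum_congr rfl fun t _ => insDeg_after t, sum_range_add d (i + s), sum_range_add d i]
  ring

lemma sum_insDeg_zero {p n : ℕ} (h : p ≤ n) :
    ∑ t ∈ range (n + 1), insDeg d p 0 w t = ∑ t ∈ range n, d t + w := by
  obtain ⟨r, rfl⟩ := Nat.exists_eq_add_of_le h
  simpa only [range_zero, sum_empty, add_zero, add_right_comm] using sum_insDeg_add d w p 0 r

lemma sum_insDeg_block {p s i : ℕ} (hip : i < p) :
    ∑ t ∈ range p, insDeg d i s (1 + ∑ u ∈ range s, d (i + u)) t =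
      ∑ t ∈ range (p + s - 1), d t + 1 := by
  obtain ⟨r, rfl⟩ := Nat.exists_eq_add_of_lt hip
  have h := sum_insDeg_add d (1 + ∑ u ∈ range s, d (i + u)) i s r
  rw [show i + r + 1 + s - 1 = i + s + r by omega, add_right_comm i r]
  linarith

end Degrees

variable {𝕜 V : Type} [Field 𝕜] [AddCommGroup V] [Module 𝕜 V]
  (m : ∀ n : ℕ, MultilinearMap 𝕜 (fun _ : Fin n => V) V) (a : V) (k : ℤ) (q : ℕ)
  (d : ℕ → ℤ) (v : ℕ → V)

/-- The left-hand side of the arity-`q` relation of a strong homotopy derivation `θ` of degree `l`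
on a homogeneous tuple `v` of degrees `d`. As for `innerVal`, the values of `θ` depend on the
degrees of its arguments, which are therefore passed along with them. -/
noncomputable def derivationDefect (l : ℤ) (θ : ℕ → (ℕ → ℤ) → (ℕ → V) → V) : V :=
  ∑ s ∈ Icc 1 q, ∑ i ∈ range (q + 1 - s),
    (((-1 : 𝕜) ^ (∑ t ∈ range i, d t)) •
        θ (q + 1 - s) (insDeg d i s (1 + ∑ u ∈ range s, d (i + u)))
          (insTup v i s (m s fun u => v (i + (u : ℕ))))
      - ((-1 : 𝕜) ^ (l + l * ∑ t ∈ range i, d t)) •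
        m (q + 1 - s) (fun j => insTup v i s
          (θ s (fun u => d (i + u)) (fun u => v (i + u))) (j : ℕ)))

/-- The summand with inner block of length `s` at position `i` of the `A_∞` relation for the tuple
`v` with `a` inserted in slot `p`. The weight `(-1)^(k + k (|v₁| + ⋯ + |v_p|))` is that of
`innerVal` up to the factor `(-1)^k`, which makes the terms match those of `derivationDefect`. -/
noncomputable def insertionTerm (p s i : ℕ) : V :=
  ((-1 : 𝕜) ^ (k + k * ∑ t ∈ range p, d t)) •
    ((-1 : 𝕜) ^ (∑ t ∈ range i, insDeg d p 0 k t)) •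
      m (q + 2 - s) (fun j => insTup (insTup v p 0 a) i s
        (m s fun u => insTup v p 0 a (i + (u : ℕ))) (j : ℕ))

lemma innerVal_eq_sum_insTup :
    innerVal 𝕜 m a k q d v = ∑ p ∈ range (q + 1),
      ((-1 : 𝕜) ^ (k * ∑ t ∈ range p, d t)) • m (q + 1) (fun j => insTup v p 0 a j) := rfl

lemma innerVal_zero : innerVal 𝕜 m 0 k q d v = 0 := by
  rw [innerVal_eq_sum_insTup]
  exact sum_eq_zero fun p hp => by rw [map_insTup_zero v _ 0 (mem_range.1 hp), smul_zero]

lemma innerVal_arity_zero : innerVal 𝕜 m a k 0 d v = m 1 fun _ => a := by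
  simp [innerVal]

variable {m a k d v} in
lemma innerVal_mem {ℬ : ℤ → Submodule 𝕜 V}
    (hmdeg : ∀ n : ℕ, 1 ≤ n → ∀ (d : Fin n → ℤ) (v : Fin n → V), (∀ j, v j ∈ ℬ (d j)) →
        m n v ∈ ℬ (1 + ∑ j, d j))
    (ha : a ∈ ℬ k) (hv : ∀ t, v t ∈ ℬ (d t)) :
    innerVal 𝕜 m a k q d v ∈ ℬ ((k + 1) + ∑ t ∈ range q, d t) := by
  rw [innerVal_eq_sum_insTup]
  refine Submodule.sum_mem _ fun p hp => Submodule.smul_mem _ _ ?_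
  have h := hmdeg (q + 1) (by omega) _ _ fun j : Fin (q + 1) => insTup_mem hv ha p 0 j
  rw [Fin.sum_univ_eq_sum_range (insDeg d p 0 k),
    sum_insDeg_zero d k (Nat.lt_succ_iff.1 (mem_range.1 hp))] at h
  convert h using 2
  ring

section InsertionTerms

variable {q}

lemma insertionTerm_of_le {p s i : ℕ} (hsq : s ≤ q) (hpi : p ≤ i) :
    insertionTerm m a k q d v p s (i + 1) =
      ((-1 : 𝕜) ^ (∑ t ∈ range i, d t)) •
        ((-1 : 𝕜) ^ (k * ∑ t ∈ range p, insDeg d i s (1 + ∑ u ∈ range s, d (i + u)) t)) •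
          m (q + 1 - s + 1)
            (fun j => insTup (insTup v i s (m s fun u => v (i + (u : ℕ)))) p 0 a j) := by
  have block_eq (u : ℕ) : insTup v p 0 a (i + 1 + u) = v (i + u) := by
    rw [add_right_comm, insTup_zero_add_one v a (by omega)]
  rw [insertionTerm, neg_one_zpow_smul_smul, neg_one_zpow_smul_smul, sum_insDeg_zero d k hpi,
    sum_insDeg_of_le d _ s hpi, insTup_insTup_of_le v a _ s hpi,
    show q + 2 - s = q + 1 - s + 1 by omega]
  simp only [block_eq]
  congr 1
  exact neg_one_zpow_eq_of_even_sub ⟨k, by ring⟩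

lemma insertionTerm_of_lt {p s i : ℕ} (hs : 1 ≤ s) (hsq : s ≤ q) (hip : i < p) :
    insertionTerm m a k q d v (p + s - 1) s i =
      ((-1 : 𝕜) ^ (∑ t ∈ range i, d t)) •
        ((-1 : 𝕜) ^ (k * ∑ t ∈ range p, insDeg d i s (1 + ∑ u ∈ range s, d (i + u)) t)) •
          m (q + 1 - s + 1)
            (fun j => insTup (insTup v i s (m s fun u => v (i + (u : ℕ)))) p 0 a j) := by
  have block_eq (u : Fin s) : insTup v (p + s - 1) 0 a (i + u) = v (i + u) :=
    insTup_of_lt v a 0 (by omega)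
  rw [insertionTerm, neg_one_zpow_smul_smul, neg_one_zpow_smul_smul,
    sum_insDeg_of_le d k 0 (by omega), sum_insDeg_block d hip, insTup_insTup_of_lt v a _ hs hip,
    show q + 2 - s = q + 1 - s + 1 by omega]
  simp only [block_eq]
  congr 2
  ring

lemma insertionTerm_add {p s : ℕ} (i : ℕ) (hps : p ≤ s) :
    insertionTerm m a k q d v (i + p) (s + 1) i =
      -(((-1 : 𝕜) ^ ((k + 1) + (k + 1) * ∑ t ∈ range i, d t)) •
        ((-1 : 𝕜) ^ (k * ∑ t ∈ range p, d (i + t))) •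
          m (q + 1 - s) (fun j => insTup v i s
            (m (s + 1) fun u => insTup (fun u => v (i + u)) p 0 a u) j)) := by
  rw [insertionTerm, neg_one_zpow_smul_smul, neg_one_zpow_smul_smul, neg_neg_one_zpow_smul,
    sum_insDeg_of_le d k 0 (by omega), sum_range_add, insTup_insTup_add v a _ i hps,
    show q + 2 - (s + 1) = q + 1 - s by omega]
  simp only [insTup_add_add]
  congr 1
  exact neg_one_zpow_eq_of_even_sub ⟨-1, by ring⟩

lemma sum_insertionTerm_outside {s : ℕ} (i : ℕ) (hs : 1 ≤ s) (hsq : s ≤ q) :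
    ∑ p ∈ range (q + 1 - s + 1),
        (if p ≤ i then insertionTerm m a k q d v p s (i + 1)
          else insertionTerm m a k q d v (p + s - 1) s i) =
      ((-1 : 𝕜) ^ (∑ t ∈ range i, d t)) •
        innerVal 𝕜 m a k (q + 1 - s) (insDeg d i s (1 + ∑ u ∈ range s, d (i + u)))
          (insTup v i s (m s fun u => v (i + (u : ℕ)))) := by
  rw [innerVal_eq_sum_insTup, smul_sum]
  refine sum_congr rfl fun p _ => ?_
  split_ifs with hpi
  · exact insertionTerm_of_le m a k d v hsq hpi
  · exact insertionTerm_of_lt m a k d v hs hsq (not_le.1 hpi)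

lemma sum_insertionTerm_inside {s i : ℕ} (hi : i < q + 1 - s) :
    ∑ p ∈ range (s + 1), insertionTerm m a k q d v (i + p) (s + 1) i =
      -(((-1 : 𝕜) ^ ((k + 1) + (k + 1) * ∑ t ∈ range i, d t)) •
        m (q + 1 - s) (fun j => insTup v i s
          (innerVal 𝕜 m a k s (fun u => d (i + u)) (fun u => v (i + u))) (j : ℕ))) := by
  rw [innerVal_eq_sum_insTup, map_insTup_sum_smul v _ s hi, smul_sum, ← sum_neg_distrib]
  exact sum_congr rfl fun p hp =>
    insertionTerm_add m a k d v i (Nat.lt_succ_iff.1 (mem_range.1 hp))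

variable {m a k d v} in
lemma sum_insertionTerm_eq_zero {ℬ : ℤ → Submodule 𝕜 V}
    (hmrel : AInftyRel 𝕜 ℬ m) (ha : a ∈ ℬ k) (hv : ∀ t, v t ∈ ℬ (d t)) (p : ℕ) :
    ∑ s ∈ Icc 1 (q + 1), ∑ i ∈ range (q + 2 - s), insertionTerm m a k q d v p s i = 0 := by
  simp only [insertionTerm, ← smul_sum]
  rw [hmrel (q + 1) (by omega) _ _ (insTup_mem hv ha p 0), smul_zero]

end InsertionTerms

lemma sum_insertionTerm_eq_defect_sub :
    ∑ p ∈ range (q + 1), ∑ s ∈ Icc 1 (q + 1), ∑ i ∈ range (q + 2 - s),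
        insertionTerm m a k q d v p s i =
      derivationDefect m q d v (k + 1) (innerVal 𝕜 m a k) -
        ((-1 : 𝕜) ^ (k + 1)) • innerVal 𝕜 m (m 1 fun _ => a) (k + 1) q d v := by
  have sum_arity_zero :
      ∑ i ∈ range (q + 1), ((-1 : 𝕜) ^ ((k + 1) + (k + 1) * ∑ t ∈ range i, d t)) •
        m (q + 1) (fun j => insTup v i 0
          (innerVal 𝕜 m a k 0 (fun u => d (i + u)) (fun u => v (i + u))) j) =
      ((-1 : 𝕜) ^ (k + 1)) • innerVal 𝕜 m (m 1 fun _ => a) (k + 1) q d v := by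
    simp only [innerVal_arity_zero, innerVal_eq_sum_insTup m (m 1 _), smul_sum,
      neg_one_zpow_smul_smul]
  rw [sum_slots_blocks,
    sum_congr rfl fun s hs => sum_congr rfl fun i _ =>
      sum_insertionTerm_outside m a k d v i (mem_Icc.1 hs).1 (mem_Icc.1 hs).2,
    sum_congr rfl fun s _ => sum_congr rfl fun i hi =>
      sum_insertionTerm_inside (q := q) (s := s) m a k d v (mem_range.1 hi),
    sum_range_eq_add_Ico _ (Nat.add_one_pos q), Ico_add_one_right_eq_Icc, ← sum_arity_zero]
  simp only [derivationDefect, sum_sub_distrib, sum_neg_distrib, Nat.sub_zero]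
  abel

variable {m a k d v} in
theorem derivationDefect_innerVal {ℬ : ℤ → Submodule 𝕜 V}
    (hmrel : AInftyRel 𝕜 ℬ m) (ha : a ∈ ℬ k) (hv : ∀ t, v t ∈ ℬ (d t)) :
    derivationDefect m q d v (k + 1) (innerVal 𝕜 m a k) =
      ((-1 : 𝕜) ^ (k + 1)) • innerVal 𝕜 m (m 1 fun _ => a) (k + 1) q d v := by
  rw [← sub_eq_zero, ← sum_insertionTerm_eq_defect_sub]
  exact sum_eq_zero fun p _ => sum_insertionTerm_eq_zero hmrel ha hv p

end Stmt5

open Stmt5 in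
theorem statement5_general {𝕜 V : Type} [Field 𝕜] [AddCommGroup V] [Module 𝕜 V]
    (ℬ : ℤ → Submodule 𝕜 V) (m : ∀ n : ℕ, MultilinearMap 𝕜 (fun _ : Fin n => V) V)
    (hmdeg : ∀ n : ℕ, 1 ≤ n → ∀ (d : Fin n → ℤ) (v : Fin n → V), (∀ j, v j ∈ ℬ (d j)) →
        m n v ∈ ℬ (1 + ∑ j, d j))
    (hmrel : AInftyRel 𝕜 ℬ m) (k : ℤ) (a : V) (ha : a ∈ ℬ k) (q : ℕ) (d : ℕ → ℤ) (v : ℕ → V)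
    (hv : ∀ t, v t ∈ ℬ (d t)) :
    innerVal 𝕜 m a k q d v ∈ ℬ ((k + 1) + ∑ t ∈ Finset.range q, d t) ∧
      derivationDefect m q d v (k + 1) (innerVal 𝕜 m a k) =
        ((-1 : 𝕜) ^ (k + 1)) • innerVal 𝕜 m (m 1 fun _ => a) (k + 1) q d v :=
  ⟨innerVal_mem q hmdeg ha hv, derivationDefect_innerVal q hmrel ha hv⟩

open Stmt5 in
/-- Let `(V,{m_n})` be an `A_∞` algebra over a field of characteristic
`0` and `a ∈ V` homogeneous of degree `k` with `m₁(a) = 0`.  Then the maps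
`θ_q(v₁,…,v_q) = Σ_p (−1)^{k(|v₁|+⋯+|v_p|)} m_{q+1}(v₁,…,v_p,a,v_{p+1},…,v_q)` form a
strong homotopy derivation of degree `k+1` of `(V,{m_n})`: they are homogeneous of degree
`k+1` and satisfy the strong homotopy derivation relations. -/
theorem statement5 {𝕜 V : Type} [Field 𝕜] [CharZero 𝕜] [AddCommGroup V] [Module 𝕜 V]
    (ℬ : ℤ → Submodule 𝕜 V) (hgr : DirectSum.IsInternal ℬ)
    (m : ∀ n : ℕ, MultilinearMap 𝕜 (fun _ : Fin n => V) V)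
    (hmdeg : ∀ n : ℕ, 1 ≤ n → ∀ (d : Fin n → ℤ) (v : Fin n → V), (∀ j, v j ∈ ℬ (d j)) →
        m n v ∈ ℬ (1 + ∑ j, d j))
    (hmrel : AInftyRel 𝕜 ℬ m)
    (k : ℤ) (a : V) (ha : a ∈ ℬ k) (hma : m 1 (fun _ => a) = 0) :
    (∀ (q : ℕ), 1 ≤ q → ∀ (d : ℕ → ℤ) (v : ℕ → V), (∀ t, v t ∈ ℬ (d t)) →
        innerVal 𝕜 m a k q d v ∈ ℬ ((k + 1) + ∑ t ∈ Finset.range q, d t)) ∧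
    (∀ (q : ℕ), 1 ≤ q → ∀ (d : ℕ → ℤ) (v : ℕ → V), (∀ t, v t ∈ ℬ (d t)) →
      ∑ s ∈ Finset.Icc 1 q, ∑ i ∈ Finset.range (q + 1 - s),
        ( ((-1 : 𝕜) ^ (∑ t ∈ Finset.range i, d t)) •
            innerVal 𝕜 m a k (q + 1 - s)
              (insDeg d i s (1 + ∑ u ∈ Finset.range s, d (i + u)))
              (insTup v i s (m s fun u => v (i + (u : ℕ))))
          - ((-1 : 𝕜) ^ ((k + 1) + (k + 1) * ∑ t ∈ Finset.range i, d t)) •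
            m (q + 1 - s) (fun j => insTup v i s
              (innerVal 𝕜 m a k s (fun u => d (i + u)) (fun u => v (i + u))) (j : ℕ)) )
        = 0) := by
  have general := statement5_general ℬ m hmdeg hmrel k a ha
  exact ⟨fun q _ d v hv => (general q d v hv).1, fun q _ d v hv =>
    (general q d v hv).2.trans (by rw [hma, innerVal_zero, smul_zero])⟩
end

section
/- Let (A,d) be a ℤ-graded vector space over a field 𝕜 of characteristic 0 with degree +1 differential d, let l_n : A^{⊗n} → A (n ≥ 2) be graded skew-symmetric maps of degree 2−n satisfying the unsuspended L_∞ relations, let k ∈ ℤ, and let θ_n : A^{⊗n} → A (n ≥ 1) be graded skew-symmetric maps of degree k−n+1 satisfying, for every n ≥ 1: d∘_1 θ_n − (−1)^{k−n+1} Σ_{m=1}^{n} θ_n∘_m d = − Σ_{i+j=n+1} (−1)^{k+j(i−1)} Σ_{σ∈USh(j,i−1)} sgn(σ) ( θ_i∘_1 l_j + (−1)^{(k+1)i} l_i∘_1 θ_j )∘σ^{−1}. Set V := ↓A, L_1 := −↓∘d∘↑, L_n := (−1)^{n(n−1)/2} ↓∘l_n∘↑^{⊗n} (n ≥ 2), Θ_1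 := ↓∘θ_1∘↑, and Θ_n := (−1)^{n(n−1)/2} ↓∘θ_n∘↑^{⊗n} (n ≥ 2). Then {Θ_q}_{q≥1} is a strong homotopy derivation of degree k of the L_∞ algebra (V,{L_n}): for every n ≥ 1 and homogeneous v_1,…,v_n ∈ V, Σ_{j=1}^{n} Σ_{σ∈USh(j,n−j)} [ (−1)^{e(σ)} Θ_{n−j+1}(L_j(v_{σ(1)},…,v_{σ(j)}), v_{σ(j+1)},…,v_{σ(n)}) − (−1)^{k} (−1)^{e(σ)} L_{n−j+1}(Θ_j(v_{σ(1)},…,v_{σ(j)}), v_{σ(j+1)},…,v_{σ(n)}) ] = 0, and conversely. -/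
/-!
STATEMENT 7.  Equivalence of the unsuspended strong-homotopy-derivation relations on `A`
with the (suspended) strong-homotopy-derivation relations on `V = ↓A`, for `L_∞` algebras.

Conventions as in the paper: a ℤ-graded vector space is a vector space `V` with an
internal grading `ℬ : ℤ → Submodule 𝕜 V`; the underlying spaces of `A` and `V = ↓A` are
identified, an element is homogeneous of degree `e` in `V` iff it is homogeneous of degree
`e + 1` in `A`.  Operations are multilinear maps evaluated on homogeneous tuples with the
usual Koszul signs.
-/

open Finset

namespace Stmt7

variable {𝕜 V : Type} [Field 𝕜] [AddCommGroup V] [Module 𝕜 V]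

/-- `σ` is a `(j, n−j)`-unshuffle. -/
def IsUnshuffle {n : ℕ} (j : ℕ) (σ : Equiv.Perm (Fin n)) : Prop :=
  ∀ t u : Fin n, t < u → ((u : ℕ) < j ∨ j ≤ (t : ℕ)) → σ t < σ u

instance {n : ℕ} (j : ℕ) (σ : Equiv.Perm (Fin n)) : Decidable (IsUnshuffle j σ) := by
  unfold IsUnshuffle; infer_instance

/-- Exponent of the Koszul sign of `σ` acting on homogeneous elements of degrees `d`. -/
def koszulE {n : ℕ} (σ : Equiv.Perm (Fin n)) (d : ℕ → ℤ) : ℤ :=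
  ∑ p ∈ Finset.univ.filter
      (fun p : Fin n × Fin n => p.1 < p.2 ∧ σ p.2 < σ p.1), d (σ p.1) * d (σ p.2)

/-- The permuted tuple `t ↦ v (σ t)`. -/
def permV {n : ℕ} (σ : Equiv.Perm (Fin n)) (v : ℕ → V) : ℕ → V := fun t =>
  if h : t < n then v (σ ⟨t, h⟩) else 0

/-- The permuted tuple of degrees `t ↦ d (σ t)`. -/
def permD {n : ℕ} (σ : Equiv.Perm (Fin n)) (d : ℕ → ℤ) : ℕ → ℤ := fun t =>
  if h : t < n then d (σ ⟨t, h⟩) else 0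

/-- Exponent of the Koszul sign produced by evaluating `↑^{⊗n}` on elements of `V = ↓A`
of `V`-degrees `e 0, …, e (n-1)`. -/
def susExp (n : ℕ) (e : ℕ → ℤ) : ℤ := ∑ t ∈ range n, ((n : ℤ) - 1 - (t : ℤ)) * e t

variable (𝕜)

/-- Graded skew symmetry on homogeneous elements (adjacent transpositions). -/
def GradedSkewSymm (ℬ : ℤ → Submodule 𝕜 V)
    (l : ∀ n : ℕ, MultilinearMap 𝕜 (fun _ : Fin n => V) V) : Prop :=
  ∀ (n : ℕ) (d : ℕ → ℤ) (a : ℕ → V), (∀ t, a t ∈ ℬ (d t)) → ∀ t, t + 1 < n →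
    l n (fun u => if (u : ℕ) = t then a (t + 1) else if (u : ℕ) = t + 1 then a t
          else a (u : ℕ))
      = -((-1 : 𝕜) ^ (d t * d (t + 1))) • l n (fun u => a (u : ℕ))

/-- The unsuspended `L_∞` relations (`n ≥ 2`), evaluated on homogeneous elements. -/
def UnsuspLRel (ℬ : ℤ → Submodule 𝕜 V) (dA : V →ₗ[𝕜] V)
    (l : ∀ n : ℕ, MultilinearMap 𝕜 (fun _ : Fin n => V) V) : Prop :=
  ∀ n : ℕ, 2 ≤ n → ∀ (d : ℕ → ℤ) (a : ℕ → V), (∀ t, a t ∈ ℬ (d t)) →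
    dA (l n fun u => a (u : ℕ))
      - ((-1 : 𝕜) ^ (n : ℤ)) •
          ∑ m ∈ range n, ((-1 : 𝕜) ^ (∑ t ∈ range m, d t)) •
            l n (fun u => if (u : ℕ) = m then dA (a m) else a (u : ℕ))
    = ∑ j ∈ Icc 2 (n - 1),
        ∑ σ ∈ Finset.univ.filter (fun σ : Equiv.Perm (Fin n) => IsUnshuffle j σ),
          (((Equiv.Perm.sign σ : ℤ) : 𝕜) *
              ((-1 : 𝕜) ^ ((j : ℤ) * ((n : ℤ) - (j : ℤ)) + koszulE σ d))) •
            l (n + 1 - j) (fun u => if (u : ℕ) = 0 then l j (fun w => permV σ a (w : ℕ))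
              else permV σ a (j + (u : ℕ) - 1))

/-- The unsuspended derivation relations for `{θ_n}` (`n ≥ 1`):
`d∘₁θ_n − (−1)^{k−n+1} Σ_{m=1}^n θ_n∘_m d
  = − Σ_{i+j=n+1} (−1)^{k+j(i−1)} Σ_{σ∈USh(j,i−1)} sgn(σ)
      (θ_i∘₁l_j + (−1)^{(k+1)i} l_i∘₁θ_j)∘σ^{−1}`,
the sum on the right ranging over the indices where the terms make sense
(`j ≥ 2` in the first summand, `i ≥ 2` in the second), evaluated on homogeneous
elements. -/
def UnsuspLDer (ℬ : ℤ → Submodule 𝕜 V) (k : ℤ) (dA : V →ₗ[𝕜] V)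
    (l θ : ∀ n : ℕ, MultilinearMap 𝕜 (fun _ : Fin n => V) V) : Prop :=
  ∀ n : ℕ, 1 ≤ n → ∀ (d : ℕ → ℤ) (a : ℕ → V), (∀ t, a t ∈ ℬ (d t)) →
    dA (θ n fun u => a (u : ℕ))
      - ((-1 : 𝕜) ^ (k - (n : ℤ) + 1)) •
          ∑ m ∈ range n, ((-1 : 𝕜) ^ (∑ t ∈ range m, d t)) •
            θ n (fun u => if (u : ℕ) = m then dA (a m) else a (u : ℕ))
    = -( (∑ j ∈ Icc 2 n,
            ∑ σ ∈ Finset.univ.filter (fun σ : Equiv.Perm (Fin n) => IsUnshuffle j σ),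
              (((Equiv.Perm.sign σ : ℤ) : 𝕜) *
                  ((-1 : 𝕜) ^ (k + (j : ℤ) * ((n : ℤ) - (j : ℤ)) + koszulE σ d))) •
                θ (n + 1 - j) (fun u => if (u : ℕ) = 0 then
                    l j (fun w => permV σ a (w : ℕ))
                  else permV σ a (j + (u : ℕ) - 1)))
        + ∑ j ∈ Icc 1 (n - 1),
            ∑ σ ∈ Finset.univ.filter (fun σ : Equiv.Perm (Fin n) => IsUnshuffle j σ),
              (((Equiv.Perm.sign σ : ℤ) : 𝕜) *
                  ((-1 : 𝕜) ^ (k + (j : ℤ) * ((n : ℤ) - (j : ℤ))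
                    + (k + 1) * ((n : ℤ) + 1 - (j : ℤ)) + koszulE σ d))) •
                l (n + 1 - j) (fun u => if (u : ℕ) = 0 then
                    θ j (fun w => permV σ a (w : ℕ))
                  else permV σ a (j + (u : ℕ) - 1)) )

/-- Value of the suspended operation `L_n` (`L_1 := −↓∘d∘↑`,
`L_n := (−1)^{n(n−1)/2} ↓∘l_n∘↑^{⊗n}` for `n ≥ 2`). -/
noncomputable def susLVal (dA : V →ₗ[𝕜] V)
    (l : ∀ n : ℕ, MultilinearMap 𝕜 (fun _ : Fin n => V) V)
    (n : ℕ) (e : ℕ → ℤ) (v : ℕ → V) : V :=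
  if n = 1 then -(dA (v 0))
  else ((-1 : 𝕜) ^ (((n * (n - 1) / 2 : ℕ) : ℤ) + susExp n e)) • l n (fun u => v (u : ℕ))

/-- Value of the suspended operation `Θ_n := (−1)^{n(n−1)/2} ↓∘θ_n∘↑^{⊗n}`
(`Θ_1 = ↓∘θ_1∘↑`). -/
noncomputable def susTVal (θ : ∀ n : ℕ, MultilinearMap 𝕜 (fun _ : Fin n => V) V)
    (n : ℕ) (e : ℕ → ℤ) (v : ℕ → V) : V :=
  ((-1 : 𝕜) ^ (((n * (n - 1) / 2 : ℕ) : ℤ) + susExp n e)) • θ n (fun u => v (u : ℕ))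

/-- `{Θ_q}` is a strong homotopy derivation of degree `k` of the `L_∞` algebra
`(V, {L_n})`:  for all `n ≥ 1` and homogeneous `v` of `V`-degrees `e`,
`Σ_{j=1}^n Σ_{σ∈USh(j,n−j)} [(−1)^{e(σ)} Θ_{n−j+1}(L_j(v_{σ(1)},…),…,v_{σ(n)})
  − (−1)^k (−1)^{e(σ)} L_{n−j+1}(Θ_j(v_{σ(1)},…),…,v_{σ(n)})] = 0`. -/
def SusLSHDer (ℬ : ℤ → Submodule 𝕜 V) (k : ℤ) (dA : V →ₗ[𝕜] V)
    (l θ : ∀ n : ℕ, MultilinearMap 𝕜 (fun _ : Fin n => V) V) : Prop :=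
  ∀ n : ℕ, 1 ≤ n → ∀ (e : ℕ → ℤ) (v : ℕ → V), (∀ t, v t ∈ ℬ (e t + 1)) →
    ∑ j ∈ Icc 1 n,
      ∑ σ ∈ Finset.univ.filter (fun σ : Equiv.Perm (Fin n) => IsUnshuffle j σ),
        ( ((-1 : 𝕜) ^ koszulE σ e) •
            susTVal 𝕜 θ (n - j + 1)
              (fun t => if t = 0 then 1 + ∑ w ∈ range j, permD σ e w
                else permD σ e (j + t - 1))
              (fun t => if t = 0 then susLVal 𝕜 dA l j (permD σ e) (permV σ v)
                else permV σ v (j + t - 1))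
          - ((-1 : 𝕜) ^ (k + koszulE σ e)) •
            susLVal 𝕜 dA l (n - j + 1)
              (fun t => if t = 0 then k + ∑ w ∈ range j, permD σ e w
                else permD σ e (j + t - 1))
              (fun t => if t = 0 then susTVal 𝕜 θ j (permD σ e) (permV σ v)
                else permV σ v (j + t - 1)) ) = 0

end Stmt7

/-!
Suspension carries skew compositions to symmetric ones. A term `Θ_i ∘ L_j` or `L_i ∘ Θ_j` of the
suspended relations, at degrees `e` in `↓A`, has the Koszul sign of `σ` in the degrees `e` and the
signs of two suspended operations; the corresponding unsuspended term has the signature of `σ` and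
the Koszul sign in the degrees `e + 1`. The two differ by a sign that depends on neither `σ` nor
`j`, times `(-1)^{j(n-j)}` in the first case and `(-1)^{j(n-j) + (k+1)(n-j)}` in the second.

Treating `-d` as a unary operation `l_1`, both sets of relations therefore say that the same
expression vanishes. Its terms with `l_1` are the differential terms of the unsuspended relations:
the `j = n` term of `L ∘ Θ` gives `d ∘ θ_n`, and the `j = 1` term of `Θ ∘ L` runs over the
`(1, n-1)`-unshuffles, where skew symmetry moves `d a_m` from the front back to its own place.
-/

namespace Stmt7

section Signs

variable {𝕜 : Type*} [DivisionRing 𝕜] {n : ℕ}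

lemma neg_one_zpow_add (a b : ℤ) : (-1 : 𝕜) ^ (a + b) = (-1 : 𝕜) ^ a * (-1 : 𝕜) ^ b :=
  zpow_add₀ (neg_ne_zero.mpr one_ne_zero) a b

lemma neg_one_zpow_congr {a b : ℤ} (h : Even (a - b)) : (-1 : 𝕜) ^ a = (-1 : 𝕜) ^ b := by
  simp only [neg_one_zpow_eq_ite, Int.even_sub.mp h]

lemma neg_neg_one_zpow (a : ℤ) : -(-1 : 𝕜) ^ a = (-1 : 𝕜) ^ (a + 1) := by
  rw [neg_one_zpow_add, zpow_one, mul_neg_one]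

lemma neg_one_zpow_smul_eq_zero_iff {V : Type*} [AddCommGroup V] [Module 𝕜 V]
    (c : ℤ) (x : V) : (-1 : 𝕜) ^ c • x = 0 ↔ x = 0 :=
  smul_eq_zero_iff_right (zpow_ne_zero c (neg_ne_zero.mpr one_ne_zero))

/-- The inversions of `σ`, as pairs of positions: the index set of the sum `koszulE σ`. -/
def inversions (σ : Equiv.Perm (Fin n)) : Finset (Fin n × Fin n) :=
  Finset.univ.filter fun p => p.1 < p.2 ∧ σ p.2 < σ p.1

lemma sign_eq_neg_one_pow_card_inversions (σ : Equiv.Perm (Fin n)) :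
    Equiv.Perm.sign σ = (-1) ^ (inversions σ).card := by
  rw [inversions, Equiv.Perm.sign_eq_prod_prod_Ioi, ← Finset.prod_const, Finset.prod_filter,
    Fintype.prod_prod_type]
  refine Finset.prod_congr rfl fun t _ => ?_
  rw [← Finset.prod_subset (Finset.subset_univ (Finset.Ioi t))
    fun u _ hu => if_neg fun h => hu (Finset.mem_Ioi.mpr h.1)]
  refine Finset.prod_congr rfl fun u hu => ?_
  have htu : t < u := Finset.mem_Ioi.mp hu
  rcases (σ.injective.ne htu.ne).lt_or_gt with h | h <;> simp [htu, h, h.not_gt]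

lemma koszulE_add_one (σ : Equiv.Perm (Fin n)) (e : ℕ → ℤ) :
    koszulE σ (fun t => e t + 1)
      = koszulE σ e + ∑ p ∈ inversions σ, (e (σ p.1) + e (σ p.2)) + (inversions σ).card := by
  rw [Finset.card_eq_sum_ones]
  push_cast
  rw [koszulE, koszulE, ← inversions, ← Finset.sum_add_distrib, ← Finset.sum_add_distrib]
  exact Finset.sum_congr rfl fun p _ => by ring

lemma susExp_eq_sum_pairs (e : ℕ → ℤ) :
    susExp n e = ∑ p : Fin n × Fin n, if p.1 < p.2 then e p.1 else 0 := by
  rw [susExp, Finset.sum_range, Fintype.sum_prod_type]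
  refine Finset.sum_congr rfl fun t _ => ?_
  simp only [← Finset.sum_filter, Finset.sum_const, Finset.filter_lt_eq_Ioi, Fin.card_Ioi,
    nsmul_eq_mul]
  rw [Nat.cast_sub (by have := t.isLt; omega), Nat.cast_sub (by have := t.isLt; omega),
    Nat.cast_one]

lemma susExp_permD (σ : Equiv.Perm (Fin n)) (e : ℕ → ℤ) :
    susExp n (permD σ e) = susExp n e + ∑ p ∈ inversions σ, (e (σ p.1) - e (σ p.2)) := by
  have hreindex : susExp n e
      = ∑ p : Fin n × Fin n, if σ p.1 < σ p.2 then e (σ p.1) else 0 := by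
    rw [susExp_eq_sum_pairs, ← (Equiv.prodCongr σ σ).sum_comp]
    rfl
  have hswap : ∑ p ∈ inversions σ, e (σ p.2)
      = ∑ p : Fin n × Fin n, if p.2 < p.1 ∧ σ p.1 < σ p.2 then e (σ p.1) else 0 := by
    rw [inversions, Finset.sum_filter, ← (Equiv.prodComm (Fin n) (Fin n)).sum_comp]
    rfl
  rw [Finset.sum_sub_distrib, hswap, hreindex, susExp_eq_sum_pairs, inversions, Finset.sum_filter,
    ← Finset.sum_sub_distrib, ← Finset.sum_add_distrib]
  refine Finset.sum_congr rfl fun ⟨t, u⟩ _ => ?_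
  simp only [permD, Fin.is_lt, dif_pos, Fin.eta]
  rcases lt_trichotomy t u with h | rfl | h
  · rcases (σ.injective.ne h.ne).lt_or_gt with h' | h' <;> simp [h, h', h.not_gt, h'.not_gt]
  · simp
  · rcases (σ.injective.ne h.ne).lt_or_gt with h' | h' <;> simp [h, h', h.not_gt, h'.not_gt]

lemma susExp_add_one (n : ℕ) (e : ℕ → ℤ) :
    susExp n (fun t => e t + 1) = (n * (n - 1) / 2 : ℕ) + susExp n e := by
  have htriangle : ∑ t ∈ range n, ((n : ℤ) - 1 - t) = (n * (n - 1) / 2 : ℕ) := by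
    rw [← Finset.sum_range_id, ← Finset.sum_range_reflect, Nat.cast_sum]
    refine Finset.sum_congr rfl fun t ht => ?_
    have := Finset.mem_range.mp ht
    omega
  rw [← htriangle, susExp, susExp, ← Finset.sum_add_distrib]
  exact Finset.sum_congr rfl fun t _ => by ring

/-- The suspension exponent of a composition `f ∘₁ g`, where `c` is the degree of `g`. -/
lemma susExp_comp {j : ℕ} (hj : j ≤ n) (e : ℕ → ℤ) (c : ℤ) :
    susExp (n - j + 1) (fun t => if t = 0 then c + ∑ w ∈ range j, e w else e (j + t - 1))
      + susExp j e = ((n : ℤ) - j) * c + susExp n e := by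
  obtain ⟨m, rfl⟩ := Nat.exists_eq_add_of_le hj
  have hhead : ∑ t ∈ range j, (((j + m : ℕ) : ℤ) - 1 - t) * e t
      = m * ∑ t ∈ range j, e t + ∑ t ∈ range j, ((j : ℤ) - 1 - t) * e t := by
    rw [Finset.mul_sum, ← Finset.sum_add_distrib]
    exact Finset.sum_congr rfl fun t _ => by push_cast; ring
  have htail : ∑ t ∈ range m, (((m + 1 : ℕ) : ℤ) - 1 - (t + 1 : ℕ)) * e (j + t)
      = ∑ t ∈ range m, (((j + m : ℕ) : ℤ) - 1 - (j + t : ℕ)) * e (j + t) :=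
    Finset.sum_congr rfl fun t _ => by push_cast; ring
  simp only [susExp, Nat.add_sub_cancel_left, Finset.sum_range_succ', Finset.sum_range_add,
    Nat.add_eq_zero_iff, one_ne_zero, and_false, if_false, if_true, ← add_assoc,
    Nat.add_sub_cancel]
  rw [hhead, htail]
  push_cast
  ring

/-- Passing from `e` to `e + 1` changes the Koszul sign by the signature of `σ` and by the change of
`susExp` under `σ`: all three are sums over the inversions of `σ`. -/
lemma suspension_sign {j : ℕ} (hj : j ≤ n) (σ : Equiv.Perm (Fin n)) (e : ℕ → ℤ) (c : ℤ) :
    (-1 : 𝕜) ^ koszulE σ e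
      * ((-1 : 𝕜) ^ susExp (n - j + 1) (fun t => (if t = 0 then c + ∑ w ∈ range j, permD σ e w
            else permD σ e (j + t - 1)) + 1)
        * (-1 : 𝕜) ^ susExp j (fun t => permD σ e t + 1))
      = (-1 : 𝕜) ^ susExp n (fun t => e t + 1)
        * ((-1 : 𝕜) ^ ((j : ℤ) * (n - j) + (n - j) * (c + 1))
          * (((Equiv.Perm.sign σ : ℤ) : 𝕜) * (-1 : 𝕜) ^ koszulE σ (fun t => e t + 1))) := by
  have hdegrees : (fun t => (if t = 0 then c + ∑ w ∈ range j, permD σ e w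
        else permD σ e (j + t - 1)) + 1)
      = fun t => if t = 0 then (c + 1 - j) + ∑ w ∈ range j, (permD σ e w + 1)
        else permD σ e (j + t - 1) + 1 := by
    funext t
    split_ifs
    · simp only [Finset.sum_add_distrib, Finset.sum_const, Finset.card_range, nsmul_eq_mul]
      ring
    · rfl
  have hsign : ((Equiv.Perm.sign σ : ℤ) : 𝕜) = (-1 : 𝕜) ^ ((inversions σ).card : ℤ) := by
    simp [sign_eq_neg_one_pow_card_inversions]
  have hcomp := susExp_comp hj (fun t => permD σ e t + 1) (c + 1 - j)
  have hperm := susExp_permD σ e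
  rw [Finset.sum_sub_distrib] at hperm
  have hkoszul := koszulE_add_one σ e
  rw [Finset.sum_add_distrib] at hkoszul
  rw [hdegrees, hsign]
  simp only [← neg_one_zpow_add]
  refine neg_one_zpow_congr ⟨-(j * (n - j)) - (inversions σ).card
    - ∑ p ∈ inversions σ, e (σ p.2), ?_⟩
  linear_combination hcomp + susExp_add_one n (permD σ e) - susExp_add_one n e + hperm - hkoszul

end Signs

section Unshuffles

variable {n : ℕ}

lemma isUnshuffle_self_iff (σ : Equiv.Perm (Fin n)) : IsUnshuffle n σ ↔ σ = 1 := by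
  constructor
  · intro h
    have hmono : StrictMono σ := fun t u htu => h t u htu (Or.inl u.isLt)
    exact Equiv.coe_fn_injective ((hmono.range_inj strictMono_id).mp (by simp))
  · rintro rfl t u htu -
    exact htu

lemma isUnshuffle_one_iff (σ : Equiv.Perm (Fin (n + 1))) :
    IsUnshuffle 1 σ ↔ σ = (Fin.cycleRange (σ 0)).symm := by
  constructor
  · intro h
    have hmono : StrictMono (σ ∘ Fin.succ) := fun t u htu =>
      h _ _ (Fin.succ_lt_succ_iff.mpr htu) (Or.inr (by simp))
    have hrange : Set.range (σ ∘ Fin.succ) = Set.range (σ 0).succAbove := by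
      rw [Set.range_comp, Fin.range_succ, Equiv.image_compl, Set.image_singleton,
        Fin.range_succAbove]
    have hsucc := (hmono.range_inj (Fin.strictMono_succAbove (σ 0))).mp hrange
    refine Equiv.ext (Fin.cases ?_ fun t => ?_)
    · rw [Fin.cycleRange_symm_zero]
    · rw [Fin.cycleRange_symm_succ]
      exact congrFun hsucc t
  · intro h t u htu htu'
    have ht : t ≠ 0 := by
      rintro rfl
      have : 0 < (u : ℕ) := htu
      have : ¬1 ≤ ((0 : Fin (n + 1)) : ℕ) := by simp
      omega
    obtain ⟨t, rfl⟩ := Fin.exists_succ_eq.mpr ht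
    obtain ⟨u, rfl⟩ := Fin.exists_succ_eq.mpr (Fin.ne_zero_of_lt htu)
    rw [h, Fin.cycleRange_symm_succ, Fin.cycleRange_symm_succ]
    exact Fin.strictMono_succAbove _ (Fin.succ_lt_succ_iff.mp htu)

lemma sum_isUnshuffle_one {M : Type*} [AddCommMonoid M] (F : Equiv.Perm (Fin (n + 1)) → M) :
    ∑ σ ∈ Finset.univ.filter (fun σ : Equiv.Perm (Fin (n + 1)) => IsUnshuffle 1 σ), F σ
      = ∑ m : Fin (n + 1), F (Fin.cycleRange m).symm := by
  refine Finset.sum_bij' (fun σ _ => σ 0) (fun m _ => (Fin.cycleRange m).symm) (by simp)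
    (fun m _ => by simp [isUnshuffle_one_iff]) (fun σ hσ => ?_) (by simp) (fun σ hσ => ?_)
  · exact ((isUnshuffle_one_iff σ).mp (Finset.mem_filter.mp hσ).2).symm
  · exact congrArg F ((isUnshuffle_one_iff σ).mp (Finset.mem_filter.mp hσ).2)

lemma koszulE_one (d : ℕ → ℤ) : koszulE (1 : Equiv.Perm (Fin n)) d = 0 :=
  Finset.sum_eq_zero fun _ hp =>
    absurd (Finset.mem_filter.mp hp).2.2 (Finset.mem_filter.mp hp).2.1.not_gt

lemma inversions_cycleRange_symm (m : Fin (n + 1)) :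
    inversions (Fin.cycleRange m).symm
      = (Finset.univ.filter fun t : Fin n => t.castSucc < m).image fun t => (0, t.succ) := by
  ext ⟨t, u⟩
  cases t using Fin.cases <;> cases u using Fin.cases <;>
    simp +contextual [inversions, Fin.cycleRange_symm_succ, Fin.succAbove_lt_iff_castSucc_lt,
      Fin.succ_ne_zero, eq_comm, le_of_lt]

lemma koszulE_cycleRange_symm (m : Fin (n + 1)) (d : ℕ → ℤ) :
    koszulE (Fin.cycleRange m).symm d = d m * ∑ t ∈ range m, d t := by
  have hinj : Set.InjOn (fun t : Fin n => ((0 : Fin (n + 1)), t.succ))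
      (Finset.univ.filter fun t : Fin n => t.castSucc < m) := fun _ _ _ _ h =>
    Fin.succ_injective n (Prod.ext_iff.mp h).2
  rw [koszulE, ← inversions, inversions_cycleRange_symm, Finset.sum_image hinj, Finset.mul_sum,
    Finset.sum_filter]
  calc
    _ = ∑ t : Fin n, if (t : ℕ) < m then d m * d t else 0 := by
      refine Finset.sum_congr rfl fun t _ => ?_
      have hlt : t.castSucc < m ↔ (t : ℕ) < m := Iff.rfl
      rw [← if_congr hlt rfl rfl]
      split_ifs with h
      · rw [Fin.cycleRange_symm_zero, Fin.cycleRange_symm_succ, Fin.succAbove_of_castSucc_lt _ _ h,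
          Fin.val_castSucc]
      · rfl
    _ = ∑ t ∈ range n, if t < (m : ℕ) then d m * d t else 0 :=
      (Finset.sum_range fun t => if t < (m : ℕ) then d m * d t else 0).symm
    _ = ∑ t ∈ range m, d m * d t := by
      rw [← Finset.sum_filter]
      refine Finset.sum_congr (Finset.ext fun t => ?_) fun _ _ => rfl
      simp only [Finset.mem_filter, Finset.mem_range]
      omega

end Unshuffles

section MoveToFront

variable {𝕜 V : Type} [Field 𝕜] [AddCommGroup V] [Module 𝕜 V]

/-- The sequence `a` with its entry at position `p` moved to the front, the entries before it
shifting by one: the permuted tuple of the `(1, n - 1)`-unshuffle that starts with `p`. -/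
def moveToFront {X : Type*} (p : ℕ) (a : ℕ → X) : ℕ → X := fun u =>
  if u = 0 then a p else if u ≤ p then a (u - 1) else a u

lemma moveToFront_succ {X : Type*} (p : ℕ) (a : ℕ → X) :
    moveToFront (p + 1) a = moveToFront p (a ∘ Equiv.swap p (p + 1)) := by
  funext u
  simp only [moveToFront, Function.comp_apply, Equiv.swap_apply_def]
  grind

lemma permV_cycleRange_symm {N : ℕ} (m u : Fin (N + 1)) (a : ℕ → V) :
    permV (Fin.cycleRange m).symm a u = moveToFront m a u := by
  cases u using Fin.cases with
  | zero => simp [permV, moveToFront]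
  | succ u =>
    rw [permV, dif_pos u.succ.isLt, Fin.eta, Fin.cycleRange_symm_succ]
    simp only [moveToFront, Fin.succAbove, Fin.lt_def, Fin.val_castSucc, Fin.val_succ]
    grind

lemma GradedSkewSymm.map_moveToFront {ℬ : ℤ → Submodule 𝕜 V}
    {θ : ∀ n : ℕ, MultilinearMap 𝕜 (fun _ : Fin n => V) V} (hθ : GradedSkewSymm 𝕜 ℬ θ)
    {n p : ℕ} (hp : p < n) {d : ℕ → ℤ} {a : ℕ → V} (ha : ∀ t, a t ∈ ℬ (d t)) :
    θ n (fun u => moveToFront p a u)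
      = (-1 : 𝕜) ^ (p + d p * ∑ t ∈ range p, d t) • θ n (fun u => a u) := by
  induction p generalizing d a with
  | zero =>
    have hid : moveToFront 0 a = a := by
      funext u
      simp only [moveToFront]
      grind
    simp [hid]
  | succ p ih =>
    have hswap : θ n (fun u => (a ∘ Equiv.swap p (p + 1)) u)
        = (-1 : 𝕜) ^ (d p * d (p + 1) + 1) • θ n (fun u => a u) := by
      rw [← neg_neg_one_zpow, ← hθ n d a ha p hp]
      simp only [Function.comp_def, Equiv.swap_apply_def, apply_ite a]
    have hsum : ∑ t ∈ range p, (d ∘ Equiv.swap p (p + 1)) t = ∑ t ∈ range p, d t :=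
      Finset.sum_congr rfl fun t ht => by
        have := Finset.mem_range.mp ht
        rw [Function.comp_apply, Equiv.swap_apply_of_ne_of_ne (by omega) (by omega)]
    rw [moveToFront_succ, ih (by omega) (d := d ∘ Equiv.swap p (p + 1))
      (a := a ∘ Equiv.swap p (p + 1)) fun t => ha _, hsum, hswap,
      smul_smul, ← neg_one_zpow_add, Function.comp_apply, Equiv.swap_apply_left,
      Finset.sum_range_succ]
    congr 2
    push_cast
    ring

end MoveToFront

section WithUnary

variable {R M : Type*} [CommSemiring R] [AddCommMonoid M] [Module R M]

lemma map_smul_entry {n : ℕ} (f : MultilinearMap R (fun _ : Fin n => M) M) {m : ℕ} (hm : m < n)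
    (c : R) (x : M) (a : ℕ → M) :
    f (fun u => if (u : ℕ) = m then c • x else a u)
      = c • f (fun u => if (u : ℕ) = m then x else a u) := by
  have hupdate (z : M) : (fun u : Fin n => if (u : ℕ) = m then z else a u)
      = Function.update (fun u : Fin n => a u) ⟨m, hm⟩ z := by
    funext u
    simp only [Function.update_apply, Fin.ext_iff]
  rw [hupdate, hupdate, f.map_update_smul]

/-- The family `l` with its unary operation replaced by `D`. With `D = -d` it carries the
differential and the higher operations of an `L_∞` algebra in a single family; the sign is the one
of `L_1 = -↓∘d∘↑`. -/
noncomputable def withUnary (D : M →ₗ[R] M)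
    (l : ∀ n : ℕ, MultilinearMap R (fun _ : Fin n => M) M) :
    ∀ n : ℕ, MultilinearMap R (fun _ : Fin n => M) M :=
  Function.update l 1 (MultilinearMap.ofSubsingleton R M M (0 : Fin 1) D)

variable (l : ∀ n : ℕ, MultilinearMap R (fun _ : Fin n => M) M)

lemma withUnary_one (D : M →ₗ[R] M) (x : Fin 1 → M) : withUnary D l 1 x = D (x 0) := by
  simp [withUnary]

lemma withUnary_of_ne (D : M →ₗ[R] M) {n : ℕ} (hn : n ≠ 1) : withUnary D l n = l n :=
  Function.update_of_ne hn _ _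

end WithUnary

section Compositions

variable {𝕜 V : Type} [Field 𝕜] [AddCommGroup V] [Module 𝕜 V]

/-- The composition `(f_{n+1-j} ∘₁ g_j) ∘ σ⁻¹` evaluated on `a`, without its Koszul sign. -/
def permComp (f g : ∀ n : ℕ, MultilinearMap 𝕜 (fun _ : Fin n => V) V) {n : ℕ} (j : ℕ)
    (σ : Equiv.Perm (Fin n)) (a : ℕ → V) : V :=
  f (n + 1 - j) (fun u => if (u : ℕ) = 0 then g j (fun w => permV σ a (w : ℕ))
    else permV σ a (j + (u : ℕ) - 1))

/-- The graded skew-symmetric composition `Σ_{σ∈USh(j,n-j)} sgn(σ) (f_{n+1-j} ∘₁ g_j) ∘ σ⁻¹`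
evaluated on elements `a` of degrees `d`. -/
def skewComp (f g : ∀ n : ℕ, MultilinearMap 𝕜 (fun _ : Fin n => V) V) (n j : ℕ) (d : ℕ → ℤ)
    (a : ℕ → V) : V :=
  ∑ σ ∈ Finset.univ.filter (fun σ : Equiv.Perm (Fin n) => IsUnshuffle j σ),
    (((Equiv.Perm.sign σ : ℤ) : 𝕜) * (-1 : 𝕜) ^ koszulE σ d) • permComp f g j σ a

/-- The graded symmetric composition `Σ_{σ∈USh(j,n-j)} (F_{n+1-j} ∘₁ G_j) ∘ σ⁻¹` of the suspensions
`F`, `G` of `f`, `g`, evaluated on elements `v` of degrees `e` in `↓A`. Here `c` is the degree of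
`G_j`. -/
noncomputable def susComp (f g : ∀ n : ℕ, MultilinearMap 𝕜 (fun _ : Fin n => V) V) (c : ℤ)
    (n j : ℕ) (e : ℕ → ℤ) (v : ℕ → V) : V :=
  ∑ σ ∈ Finset.univ.filter (fun σ : Equiv.Perm (Fin n) => IsUnshuffle j σ),
    (-1 : 𝕜) ^ koszulE σ e •
      susTVal 𝕜 f (n - j + 1)
        (fun t => if t = 0 then c + ∑ w ∈ range j, permD σ e w else permD σ e (j + t - 1))
        (fun t => if t = 0 then susTVal 𝕜 g j (permD σ e) (permV σ v)
          else permV σ v (j + t - 1))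

variable (f g l θ : ∀ n : ℕ, MultilinearMap 𝕜 (fun _ : Fin n => V) V)

lemma neg_one_zpow_smul_skewComp (n j : ℕ) (d : ℕ → ℤ) (a : ℕ → V) (c : ℤ) :
    (-1 : 𝕜) ^ c • skewComp f g n j d a
      = ∑ σ ∈ Finset.univ.filter (fun σ : Equiv.Perm (Fin n) => IsUnshuffle j σ),
          (((Equiv.Perm.sign σ : ℤ) : 𝕜) * (-1 : 𝕜) ^ (c + koszulE σ d)) • permComp f g j σ a := by
  simp only [skewComp, Finset.smul_sum, smul_smul, neg_one_zpow_add, mul_left_comm]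

lemma skewComp_withUnary_right (D : V →ₗ[𝕜] V) {n j : ℕ} (hj : j ≠ 1) (d : ℕ → ℤ) (a : ℕ → V) :
    skewComp f (withUnary D l) n j d a = skewComp f l n j d a := by
  simp only [skewComp, permComp, withUnary_of_ne l D hj]

lemma skewComp_withUnary_left (D : V →ₗ[𝕜] V) {n j : ℕ} (hj : j ≠ n) (d : ℕ → ℤ) (a : ℕ → V) :
    skewComp (withUnary D l) g n j d a = skewComp l g n j d a := by
  simp only [skewComp, permComp, withUnary_of_ne l D (show n + 1 - j ≠ 1 by omega)]

lemma skewComp_withUnary_left_self (D : V →ₗ[𝕜] V) (n : ℕ) (d : ℕ → ℤ) (a : ℕ → V) :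
    skewComp (withUnary D l) g n n d a = D (g n fun u => a u) := by
  have hone : Finset.univ.filter (fun σ : Equiv.Perm (Fin n) => IsUnshuffle n σ) = {1} := by
    ext σ
    simp [isUnshuffle_self_iff]
  have hn : n + 1 - n = 1 := by omega
  rw [skewComp, hone, Finset.sum_singleton, koszulE_one, permComp, hn, withUnary_one]
  simp [permV]

lemma permComp_withUnary_right_cycleRange_symm (D : V →ₗ[𝕜] V) {N : ℕ} (m : Fin (N + 1))
    (a : ℕ → V) :
    permComp f (withUnary D l) 1 (Fin.cycleRange m).symm a
      = f (N + 1) (fun u => moveToFront m (Function.update a m (D (a m))) u) := by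
  rw [permComp, Nat.add_sub_cancel, withUnary_one]
  congr 1
  funext u
  simp only [Nat.add_sub_cancel_left, permV_cycleRange_symm m u]
  have hzero := permV_cycleRange_symm m 0 a
  simp only [Fin.val_zero] at hzero
  simp only [Fin.val_zero, hzero, moveToFront, Function.update_apply]
  grind

lemma skewComp_withUnary_right_one {ℬ : ℤ → Submodule 𝕜 V} (hθ : GradedSkewSymm 𝕜 ℬ θ)
    {D : V →ₗ[𝕜] V} {δ : ℤ} (hD : ∀ i, ∀ v ∈ ℬ i, D v ∈ ℬ (i + δ)) {n : ℕ} (hn : 1 ≤ n)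
    {d : ℕ → ℤ} {a : ℕ → V} (ha : ∀ t, a t ∈ ℬ (d t)) :
    skewComp θ (withUnary D l) n 1 d a
      = ∑ m ∈ range n, (-1 : 𝕜) ^ (δ * ∑ t ∈ range m, d t) •
          θ n (fun u => if (u : ℕ) = m then D (a m) else a u) := by
  obtain ⟨N, rfl⟩ := Nat.exists_eq_add_of_le' hn
  rw [skewComp, sum_isUnshuffle_one, Finset.sum_range]
  refine Finset.sum_congr rfl fun m _ => ?_
  have hmem (t : ℕ) : Function.update a m (D (a m)) t ∈ ℬ (Function.update d m (d m + δ) t) := by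
    rcases eq_or_ne t m with rfl | ht
    · simpa using hD _ _ (ha m)
    · simpa [ht] using ha t
  have hsum : ∑ t ∈ range m, Function.update d m (d m + δ) t = ∑ t ∈ range m, d t :=
    Finset.sum_congr rfl fun t ht => Function.update_of_ne (Finset.mem_range.mp ht).ne _ _
  rw [permComp_withUnary_right_cycleRange_symm, hθ.map_moveToFront m.isLt hmem, smul_smul,
    koszulE_cycleRange_symm, Equiv.Perm.sign_symm, Fin.sign_cycleRange, hsum,
    Function.update_self]
  simp only [Function.update_apply]
  congr 1
  push_cast
  rw [← zpow_natCast, ← neg_one_zpow_add, ← neg_one_zpow_add]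
  exact neg_one_zpow_congr ⟨m + d m * ∑ t ∈ range m, d t, by ring⟩

lemma susTVal_eq (n : ℕ) (e : ℕ → ℤ) (v : ℕ → V) :
    susTVal 𝕜 f n e v = (-1 : 𝕜) ^ susExp n (fun t => e t + 1) • f n (fun u => v u) := by
  rw [susTVal, susExp_add_one]

lemma susLVal_eq_susTVal (dA : V →ₗ[𝕜] V) (n : ℕ) (e : ℕ → ℤ) (v : ℕ → V) :
    susLVal 𝕜 dA l n e v = susTVal 𝕜 (withUnary (-dA) l) n e v := by
  unfold susLVal susTVal
  split_ifs with h
  · subst h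
    simp [withUnary_one, susExp]
  · rw [withUnary_of_ne l _ h]

lemma susComp_eq_smul_skewComp (c : ℤ) {n j : ℕ} (hj : j ≤ n) (e : ℕ → ℤ) (v : ℕ → V) :
    susComp f g c n j e v
      = (-1 : 𝕜) ^ susExp n (fun t => e t + 1) •
          (-1 : 𝕜) ^ ((j : ℤ) * (n - j) + (n - j) * (c + 1)) •
            skewComp f g n j (fun t => e t + 1) v := by
  simp only [susComp, skewComp, Finset.smul_sum]
  refine Finset.sum_congr rfl fun σ _ => ?_
  rw [smul_smul, smul_smul, mul_assoc, ← suspension_sign hj, susTVal_eq, susTVal_eq, permComp,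
    Nat.sub_add_comm hj,
    map_smul_entry _ (Nat.succ_pos _) _ _ (fun t => permV σ v (j + t - 1)), smul_smul, smul_smul,
    mul_assoc]

/-- The failure of `θ`, of degree `k`, to be a derivation of `l`: the graded commutator of `θ` and
`l` under `skewComp`, with the signs of the unsuspended relations. The unary operation of `l` is
included, so it is applied to `withUnary (-d) l`. -/
def derivationDefect (k : ℤ) (n : ℕ) (d : ℕ → ℤ) (a : ℕ → V) : V :=
  ∑ j ∈ Icc 1 n, (-1 : 𝕜) ^ ((j : ℤ) * (n - j)) •
    (skewComp θ l n j d a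
      - (-1 : 𝕜) ^ (k + (k + 1) * ((n : ℤ) - j)) • skewComp l θ n j d a)

lemma sum_susComp_eq_smul_derivationDefect (k : ℤ) (n : ℕ) (e : ℕ → ℤ) (v : ℕ → V) :
    ∑ j ∈ Icc 1 n, (susComp θ l 1 n j e v - (-1 : 𝕜) ^ k • susComp l θ k n j e v)
      = (-1 : 𝕜) ^ susExp n (fun t => e t + 1) •
          derivationDefect l θ k n (fun t => e t + 1) v := by
  rw [derivationDefect, Finset.smul_sum]
  refine Finset.sum_congr rfl fun j hj => ?_
  have hjn := (Finset.mem_Icc.mp hj).2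
  have heven : (-1 : 𝕜) ^ ((j : ℤ) * (n - j) + (n - j) * (1 + 1)) = (-1) ^ ((j : ℤ) * (n - j)) :=
    neg_one_zpow_congr ⟨n - j, by ring⟩
  have hexp : k + ((j : ℤ) * (n - j) + (n - j) * (k + 1))
      = j * (n - j) + (k + (k + 1) * (n - j)) := by ring
  rw [susComp_eq_smul_skewComp θ l 1 hjn, susComp_eq_smul_skewComp l θ k hjn, heven,
    smul_comm ((-1 : 𝕜) ^ k) (_ ^ susExp n _), ← smul_sub, smul_sub (_ ^ ((j : ℤ) * (n - j))),
    smul_smul, smul_smul, ← neg_one_zpow_add, ← neg_one_zpow_add, hexp]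

lemma susLSHDer_iff_sum_susComp_eq_zero (ℬ : ℤ → Submodule 𝕜 V) (k : ℤ) (dA : V →ₗ[𝕜] V) :
    SusLSHDer 𝕜 ℬ k dA l θ ↔
      ∀ n : ℕ, 1 ≤ n → ∀ (e : ℕ → ℤ) (v : ℕ → V), (∀ t, v t ∈ ℬ (e t + 1)) →
        ∑ j ∈ Icc 1 n, (susComp θ (withUnary (-dA) l) 1 n j e v
          - (-1 : 𝕜) ^ k • susComp (withUnary (-dA) l) θ k n j e v) = 0 := by
  simp only [SusLSHDer, susComp, susLVal_eq_susTVal, Finset.smul_sum, smul_smul,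
    neg_one_zpow_add, Finset.sum_sub_distrib]

lemma susLSHDer_iff_derivationDefect_eq_zero (ℬ : ℤ → Submodule 𝕜 V) (k : ℤ) (dA : V →ₗ[𝕜] V) :
    SusLSHDer 𝕜 ℬ k dA l θ ↔ ∀ n : ℕ, 1 ≤ n → ∀ (d : ℕ → ℤ) (a : ℕ → V), (∀ t, a t ∈ ℬ (d t)) →
      derivationDefect (withUnary (-dA) l) θ k n d a = 0 := by
  simp only [susLSHDer_iff_sum_susComp_eq_zero, sum_susComp_eq_smul_derivationDefect,
    neg_one_zpow_smul_eq_zero_iff]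
  refine forall₂_congr fun n _ => ⟨fun h d a ha => ?_, fun h e v hv => h _ v hv⟩
  simpa using h (fun t => d t - 1) a (by simpa using ha)

lemma sum_smul_skewComp_withUnary_right {ℬ : ℤ → Submodule 𝕜 V} (hθ : GradedSkewSymm 𝕜 ℬ θ)
    {D : V →ₗ[𝕜] V} {δ : ℤ} (hD : ∀ i, ∀ v ∈ ℬ i, D v ∈ ℬ (i + δ)) {n : ℕ} (hn : 1 ≤ n)
    {d : ℕ → ℤ} {a : ℕ → V} (ha : ∀ t, a t ∈ ℬ (d t)) (c : ℕ → 𝕜) :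
    ∑ j ∈ Icc 1 n, c j • skewComp θ (withUnary D l) n j d a
      = c 1 • ∑ m ∈ range n, (-1 : 𝕜) ^ (δ * ∑ t ∈ range m, d t) •
            θ n (fun u => if (u : ℕ) = m then D (a m) else a u)
        + ∑ j ∈ Icc 2 n, c j • skewComp θ l n j d a := by
  rw [← Finset.insert_Icc_add_one_left_eq_Icc hn, Finset.sum_insert (by simp),
    skewComp_withUnary_right_one l θ hθ hD hn ha]
  congr 1
  refine Finset.sum_congr rfl fun j hj => ?_
  rw [skewComp_withUnary_right θ l D (by have := (Finset.mem_Icc.mp hj).1; omega)]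

lemma sum_smul_skewComp_withUnary_left (D : V →ₗ[𝕜] V) {n : ℕ} (hn : 1 ≤ n) (d : ℕ → ℤ)
    (a : ℕ → V) (c : ℕ → 𝕜) :
    ∑ j ∈ Icc 1 n, c j • skewComp (withUnary D l) g n j d a
      = c n • D (g n fun u => a u) + ∑ j ∈ Icc 1 (n - 1), c j • skewComp l g n j d a := by
  rw [← Finset.insert_Icc_sub_one_right_eq_Icc hn,
    Finset.sum_insert (by simp only [Finset.mem_Icc]; omega), skewComp_withUnary_left_self]
  congr 1
  refine Finset.sum_congr rfl fun j hj => ?_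
  rw [skewComp_withUnary_left g l D (by have := (Finset.mem_Icc.mp hj).2; omega)]

lemma neg_one_zpow_smul_derivationDefect (k : ℤ) (n : ℕ) (d : ℕ → ℤ) (a : ℕ → V) :
    (-1 : 𝕜) ^ k • derivationDefect l θ k n d a
      = ∑ j ∈ Icc 1 n, (-1 : 𝕜) ^ (k + (j : ℤ) * (n - j)) • skewComp θ l n j d a
        + ∑ j ∈ Icc 1 n, (-1 : 𝕜) ^ (k + (j : ℤ) * (n - j) + (k + 1) * (n + 1 - j)) •
            skewComp l θ n j d a := by
  rw [derivationDefect, Finset.smul_sum, ← Finset.sum_add_distrib]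
  refine Finset.sum_congr rfl fun j _ => ?_
  have hexp : k + (j : ℤ) * (n - j) + (k + (k + 1) * (n - j)) + 1
      = k + (j : ℤ) * (n - j) + (k + 1) * (n + 1 - j) := by ring
  rw [smul_smul, ← neg_one_zpow_add, smul_sub, smul_smul, ← neg_one_zpow_add, sub_eq_add_neg,
    ← neg_smul, neg_neg_one_zpow, hexp]

lemma neg_one_zpow_smul_derivationDefect_withUnary_neg {ℬ : ℤ → Submodule 𝕜 V}
    (hθ : GradedSkewSymm 𝕜 ℬ θ) (k : ℤ) {dA : V →ₗ[𝕜] V}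
    (hd : ∀ i, ∀ v ∈ ℬ i, dA v ∈ ℬ (i + 1)) {n : ℕ} (hn : 1 ≤ n)
    {d : ℕ → ℤ} {a : ℕ → V} (ha : ∀ t, a t ∈ ℬ (d t)) :
    (-1 : 𝕜) ^ k • derivationDefect (withUnary (-dA) l) θ k n d a
      = dA (θ n fun u => a u)
        - (-1 : 𝕜) ^ (k - (n : ℤ) + 1) •
            ∑ m ∈ range n, (-1 : 𝕜) ^ (∑ t ∈ range m, d t) •
              θ n (fun u => if (u : ℕ) = m then dA (a m) else a u)
        + (∑ j ∈ Icc 2 n, (-1 : 𝕜) ^ (k + (j : ℤ) * (n - j)) • skewComp θ l n j d a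
          + ∑ j ∈ Icc 1 (n - 1), (-1 : 𝕜) ^ (k + (j : ℤ) * (n - j) + (k + 1) * (n + 1 - j)) •
              skewComp l θ n j d a) := by
  have hneg (i : ℤ) (v : V) (hv : v ∈ ℬ i) : (-dA) v ∈ ℬ (i + 1) := neg_mem (hd i v hv)
  have hentry : ∑ m ∈ range n, (-1 : 𝕜) ^ (1 * ∑ t ∈ range m, d t) •
        θ n (fun u => if (u : ℕ) = m then (-dA) (a m) else a u)
      = -∑ m ∈ range n, (-1 : 𝕜) ^ (∑ t ∈ range m, d t) •
        θ n (fun u => if (u : ℕ) = m then dA (a m) else a u) := by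
    rw [← Finset.sum_neg_distrib]
    refine Finset.sum_congr rfl fun m hm => ?_
    have hmap := map_smul_entry (θ n) (Finset.mem_range.mp hm) (-1 : 𝕜) (dA (a m)) a
    rw [neg_one_smul, neg_one_smul] at hmap
    rw [one_mul, LinearMap.neg_apply, hmap, smul_neg]
  have hright := sum_smul_skewComp_withUnary_right l θ hθ hneg hn ha
    fun j => (-1 : 𝕜) ^ (k + (j : ℤ) * (n - j))
  have hleft := sum_smul_skewComp_withUnary_left θ l (-dA) hn d a
    fun j => (-1 : 𝕜) ^ (k + (j : ℤ) * (n - j) + (k + 1) * (n + 1 - j))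
  have hone : (-1 : 𝕜) ^ (k + ((1 : ℕ) : ℤ) * (n - (1 : ℕ))) = (-1) ^ (k - (n : ℤ) + 1) :=
    neg_one_zpow_congr ⟨n - 1, by push_cast; ring⟩
  have hself : (-1 : 𝕜) ^ (k + (n : ℤ) * (n - n) + (k + 1) * (n + 1 - n)) = -1 := by
    rw [← zpow_one (-1 : 𝕜), ← zpow_mul]
    exact neg_one_zpow_congr ⟨k, by ring⟩
  rw [neg_one_zpow_smul_derivationDefect, hright, hleft, hone, hself, hentry, smul_neg,
    neg_one_smul, LinearMap.neg_apply, neg_neg]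
  abel

lemma unsuspLDer_iff_derivationDefect_eq_zero {ℬ : ℤ → Submodule 𝕜 V}
    (hθ : GradedSkewSymm 𝕜 ℬ θ) (k : ℤ) {dA : V →ₗ[𝕜] V}
    (hd : ∀ i, ∀ v ∈ ℬ i, dA v ∈ ℬ (i + 1)) :
    UnsuspLDer 𝕜 ℬ k dA l θ ↔ ∀ n : ℕ, 1 ≤ n → ∀ (d : ℕ → ℤ) (a : ℕ → V), (∀ t, a t ∈ ℬ (d t)) →
      derivationDefect (withUnary (-dA) l) θ k n d a = 0 := by
  refine forall₅_congr fun n hn d a ha => ?_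
  rw [← neg_one_zpow_smul_eq_zero_iff (𝕜 := 𝕜) k,
    neg_one_zpow_smul_derivationDefect_withUnary_neg l θ hθ k hd hn ha, ← eq_neg_iff_add_eq_zero]
  simp only [neg_one_zpow_smul_skewComp]
  rfl

end Compositions

end Stmt7

open Stmt7 in
theorem statement7_general {𝕜 V : Type} [Field 𝕜] [AddCommGroup V] [Module 𝕜 V]
    (ℬ : ℤ → Submodule 𝕜 V) (k : ℤ)
    (dA : V →ₗ[𝕜] V) (hd : ∀ (i : ℤ) (v : V), v ∈ ℬ i → dA v ∈ ℬ (i + 1))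
    (l θ : ∀ n : ℕ, MultilinearMap 𝕜 (fun _ : Fin n => V) V)
    (hθskew : GradedSkewSymm 𝕜 ℬ θ) :
    UnsuspLDer 𝕜 ℬ k dA l θ ↔ SusLSHDer 𝕜 ℬ k dA l θ :=
  (unsuspLDer_iff_derivationDefect_eq_zero l θ hθskew k hd).trans
    (susLSHDer_iff_derivationDefect_eq_zero l θ ℬ k dA).symm

open Stmt7 in
/-- Let `(A,d)` be a ℤ-graded vector space over a field of
characteristic `0` with a degree `+1` differential, `{l_n}` graded skew-symmetric maps of
degree `2 − n` satisfying the unsuspended `L_∞` relations, `k ∈ ℤ`, and `{θ_n}` graded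
skew-symmetric maps of degree `k − n + 1`.  Then the `θ_n` satisfy the unsuspended
derivation relations iff the suspended maps `Θ_n` are a strong homotopy derivation of
degree `k` of the `L_∞` algebra `(V = ↓A, {L_n})` — and conversely. -/
theorem statement7 {𝕜 V : Type} [Field 𝕜] [CharZero 𝕜] [AddCommGroup V] [Module 𝕜 V]
    (ℬ : ℤ → Submodule 𝕜 V) (hgr : DirectSum.IsInternal ℬ) (k : ℤ)
    (dA : V →ₗ[𝕜] V) (hd : ∀ (i : ℤ) (v : V), v ∈ ℬ i → dA v ∈ ℬ (i + 1))
    (hdd : ∀ v, dA (dA v) = 0)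
    (l θ : ∀ n : ℕ, MultilinearMap 𝕜 (fun _ : Fin n => V) V)
    (hldeg : ∀ n : ℕ, 2 ≤ n → ∀ (d : Fin n → ℤ) (a : Fin n → V), (∀ j, a j ∈ ℬ (d j)) →
        l n a ∈ ℬ ((2 - (n : ℤ)) + ∑ j, d j))
    (hlskew : GradedSkewSymm 𝕜 ℬ l)
    (hlrel : UnsuspLRel 𝕜 ℬ dA l)
    (hθdeg : ∀ n : ℕ, 1 ≤ n → ∀ (d : Fin n → ℤ) (a : Fin n → V), (∀ j, a j ∈ ℬ (d j)) →
        θ n a ∈ ℬ ((k - (n : ℤ) + 1) + ∑ j, d j))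
    (hθskew : GradedSkewSymm 𝕜 ℬ θ) :
    UnsuspLDer 𝕜 ℬ k dA l θ ↔ SusLSHDer 𝕜 ℬ k dA l θ := by
  exact statement7_general ℬ k dA hd l θ hθskew
end

section
/- Let (V,{l_n}) be an L_∞ algebra over a field of characteristic 0 and let a ∈ V be homogeneous of degree k with l_1(a) = 0. Then the maps θ_n : V^{⊗n} → V defined by θ_n(v_1,…,v_n) := l_{n+1}(a, v_1,…,v_n) form a strong homotopy derivation of degree k+1 of (V,{l_n}). -/
/-!
STATEMENT 10.  Strong homotopy inner derivations of `L_∞` algebras.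

A ℤ-graded vector space is a vector space `V` with an internal grading
`ℬ : ℤ → Submodule 𝕜 V`.  An `L_∞` algebra structure is a family of graded symmetric
multilinear maps `l_n` of degree `+1` satisfying the higher Jacobi relations on
homogeneous elements; unshuffles and Koszul signs are as usual.
-/

open Finset

namespace Stmt10

variable {𝕜 V : Type} [Field 𝕜] [AddCommGroup V] [Module 𝕜 V]

/-- `σ` is a `(j, n−j)`-unshuffle: strictly monotone on the first `j` and on the last
`n − j` positions. -/
def IsUnshuffle {n : ℕ} (j : ℕ) (σ : Equiv.Perm (Fin n)) : Prop :=
  ∀ t u : Fin n, t < u → ((u : ℕ) < j ∨ j ≤ (t : ℕ)) → σ t < σ u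

instance {n : ℕ} (j : ℕ) (σ : Equiv.Perm (Fin n)) : Decidable (IsUnshuffle j σ) := by
  unfold IsUnshuffle; infer_instance

/-- Exponent of the Koszul sign of `σ` acting on homogeneous elements of degrees `d`:
`(−1)^{e(σ)} = ∏_{t<u, σ(t)>σ(u)} (−1)^{d_{σ(t)} d_{σ(u)}}`. -/
def koszulE {n : ℕ} (σ : Equiv.Perm (Fin n)) (d : ℕ → ℤ) : ℤ :=
  ∑ p ∈ Finset.univ.filter
      (fun p : Fin n × Fin n => p.1 < p.2 ∧ σ p.2 < σ p.1), d (σ p.1) * d (σ p.2)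

/-- The permuted tuple `t ↦ v (σ t)`. -/
def permV {n : ℕ} (σ : Equiv.Perm (Fin n)) (v : ℕ → V) : ℕ → V := fun t =>
  if h : t < n then v (σ ⟨t, h⟩) else 0

variable (𝕜)

/-- Graded symmetry of the operations on homogeneous elements (adjacent transpositions). -/
def GradedSymm (ℬ : ℤ → Submodule 𝕜 V)
    (l : ∀ n : ℕ, MultilinearMap 𝕜 (fun _ : Fin n => V) V) : Prop :=
  ∀ (n : ℕ) (d : ℕ → ℤ) (v : ℕ → V), (∀ t, v t ∈ ℬ (d t)) → ∀ t, t + 1 < n →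
    l n (fun u => if (u : ℕ) = t then v (t + 1) else if (u : ℕ) = t + 1 then v t
          else v (u : ℕ))
      = ((-1 : 𝕜) ^ (d t * d (t + 1))) • l n (fun u => v (u : ℕ))

/-- The higher Jacobi relations:  for every `n ≥ 1` and homogeneous `v` of degrees `d`,
`Σ_{j=1}^n Σ_{σ ∈ USh(j,n−j)} (−1)^{e(σ)} l_{n−j+1}(l_j(v_{σ(1)},…,v_{σ(j)}),…,v_{σ(n)}) = 0`. -/
def LInftyRel (ℬ : ℤ → Submodule 𝕜 V)
    (l : ∀ n : ℕ, MultilinearMap 𝕜 (fun _ : Fin n => V) V) : Prop :=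
  ∀ n : ℕ, 1 ≤ n → ∀ (d : ℕ → ℤ) (v : ℕ → V), (∀ t, v t ∈ ℬ (d t)) →
    ∑ j ∈ Icc 1 n,
      ∑ σ ∈ Finset.univ.filter (fun σ : Equiv.Perm (Fin n) => IsUnshuffle j σ),
        ((-1 : 𝕜) ^ koszulE σ d) •
          l (n - j + 1) (fun u => if (u : ℕ) = 0 then l j (fun w => permV σ v (w : ℕ))
            else permV σ v (j + (u : ℕ) - 1)) = 0

end Stmt10

/-!
Write `g ∘ f` for the composition of two families of operations, summed over unshuffles with Koszul
signs, so that the higher Jacobi relations read `l ∘ l = 0`. In an unshuffle of `(a, v₁, …, vₙ)` the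
letter `a` stands at the start of one of the two blocks. If it opens the first block, it is an
argument of the inner operation, and these terms add up to `l ∘ θ`, apart from the term
`l_{n+1}(l₁(a), v₁, …, vₙ)` in which `a` is alone in its block. If it opens the second block, graded
symmetry moves it in front of the inner operation: the Koszul sign of moving `a` past the arguments
of `l_j` then occurs twice and cancels, the degree one of `l_j` leaves `(-1)^k`, and these terms add
up to `(-1)^k θ ∘ l`. Since `l₁(a) = 0`, the relation `l ∘ l = 0` on `(a, v₁, …, vₙ)` is
`l ∘ θ + (-1)^k θ ∘ l = 0`.
-/

namespace Stmt10

/-! ### Unshuffles of `n + 1` letters -/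

/-- The permutation of `Fin (n + 1)` whose word is the word of `τ`, shifted up by one, with the
letter `0` inserted at position `p`. -/
def insertZero {n : ℕ} (p : Fin (n + 1)) (τ : Equiv.Perm (Fin n)) : Equiv.Perm (Fin (n + 1)) :=
  Equiv.Perm.decomposeFin.symm (0, τ) * p.cycleRange

@[simp]
theorem insertZero_apply_self {n : ℕ} (p : Fin (n + 1)) (τ : Equiv.Perm (Fin n)) :
    insertZero p τ p = 0 := by
  simp [insertZero]

@[simp]
theorem insertZero_apply_succAbove {n : ℕ} (p : Fin (n + 1)) (τ : Equiv.Perm (Fin n))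
    (t : Fin n) : insertZero p τ (p.succAbove t) = (τ t).succ := by
  simp [insertZero]

theorem insertZero_injective {n : ℕ} (p : Fin (n + 1)) :
    Function.Injective (insertZero p) := fun τ τ' h => by
  simpa [insertZero] using h

theorem exists_insertZero_eq {n : ℕ} {p : Fin (n + 1)} {σ : Equiv.Perm (Fin (n + 1))}
    (hσ : σ p = 0) : ∃ τ, insertZero p τ = σ := by
  obtain ⟨⟨q, τ⟩, hq⟩ := Equiv.Perm.decomposeFin.symm.surjective (σ * p.cycleRange⁻¹)
  have hfix : (σ * p.cycleRange⁻¹) 0 = 0 := by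
    rw [Equiv.Perm.mul_apply, Equiv.Perm.inv_eq_iff_eq.mpr (Fin.cycleRange_self p).symm, hσ]
  obtain rfl : q = 0 := by
    rw [← hfix, ← hq, Equiv.Perm.decomposeFin_symm_apply_zero]
  exact ⟨τ, by rw [insertZero, hq, inv_mul_cancel_right]⟩

theorem sum_filter_apply_eq_zero {n : ℕ} {M : Type*} [AddCommMonoid M] (p : Fin (n + 1))
    (P : Equiv.Perm (Fin (n + 1)) → Prop) [DecidablePred P]
    (F : Equiv.Perm (Fin (n + 1)) → M) :
    ∑ σ with P σ ∧ σ p = 0, F σ = ∑ τ with P (insertZero p τ), F (insertZero p τ) := by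
  symm
  refine Finset.sum_bij (fun τ _ => insertZero p τ) (by simp)
    (fun τ _ τ' _ h => insertZero_injective p h) (fun σ hσ => ?_) (fun _ _ => rfl)
  simp only [Finset.mem_filter, Finset.mem_univ, true_and] at hσ
  obtain ⟨τ, rfl⟩ := exists_insertZero_eq hσ.2
  exact ⟨τ, by simpa using hσ.1, rfl⟩

theorem val_succAbove {n : ℕ} (p : Fin (n + 1)) (t : Fin n) :
    (p.succAbove t : ℕ) = if (t : ℕ) < p then (t : ℕ) else t + 1 := by
  simp only [Fin.succAbove, Fin.lt_def, Fin.val_castSucc]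
  split_ifs <;> rfl

theorem isUnshuffle_insertZero_iff {n j : ℕ} {p : Fin (n + 1)} (hp : (p : ℕ) = 0 ∨ (p : ℕ) = j)
    (τ : Equiv.Perm (Fin n)) :
    IsUnshuffle j (insertZero p τ) ↔
      ∀ t u : Fin n, t < u → ((p.succAbove u : ℕ) < j ∨ j ≤ (p.succAbove t : ℕ)) → τ t < τ u := by
  have hstart (t : Fin n) (ht : p.succAbove t < p) : ¬((p : ℕ) < j ∨ j ≤ (p.succAbove t : ℕ)) := by
    rw [Fin.lt_def] at ht
    omega
  simp only [IsUnshuffle, Fin.forall_iff_succAbove p, insertZero_apply_self,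
    insertZero_apply_succAbove, Fin.succAbove_lt_succAbove_iff, Fin.succ_lt_succ_iff,
    Fin.succ_pos, Fin.not_lt_zero, lt_self_iff_false, IsEmpty.forall_iff, implies_true, true_and]
  exact ⟨fun h t => (h t).2, fun h t => ⟨hstart t, h t⟩⟩

theorem isUnshuffle_insertZero_zero {n : ℕ} (j : ℕ) (τ : Equiv.Perm (Fin n)) :
    IsUnshuffle (j + 1) (insertZero 0 τ) ↔ IsUnshuffle j τ := by
  rw [isUnshuffle_insertZero_iff (Or.inl rfl)]
  simp [IsUnshuffle]

theorem isUnshuffle_insertZero_self {n : ℕ} (p : Fin (n + 1)) (τ : Equiv.Perm (Fin n)) :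
    IsUnshuffle p (insertZero p τ) ↔ IsUnshuffle p τ := by
  rw [isUnshuffle_insertZero_iff (Or.inr rfl)]
  have hlt (u : Fin n) : (p.succAbove u : ℕ) < p ↔ (u : ℕ) < p := by
    rw [val_succAbove]; split_ifs <;> omega
  have hle (t : Fin n) : (p : ℕ) ≤ p.succAbove t ↔ (p : ℕ) ≤ t := by
    rw [val_succAbove]; split_ifs <;> omega
  simp only [IsUnshuffle, hlt, hle]

theorem IsUnshuffle.apply_zero_or_apply_eq_zero {n j : ℕ} {σ : Equiv.Perm (Fin (n + 1))}
    (h : IsUnshuffle j σ) : σ 0 = 0 ∨ ∃ hj : j < n + 1, σ ⟨j, hj⟩ = 0 := by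
  obtain ⟨q, hq⟩ := σ.surjective 0
  have hnot_lt (t : Fin (n + 1)) : ¬σ t < σ q := by simp [hq]
  by_cases hqj : (q : ℕ) < j
  · rcases (Fin.zero_le q).eq_or_lt with rfl | hq0
    · exact Or.inl hq
    · exact (hnot_lt 0 (h 0 q hq0 (Or.inl hqj))).elim
  · have hj : j < n + 1 := by omega
    rcases (show (⟨j, hj⟩ : Fin (n + 1)) ≤ q from not_lt.mp hqj).eq_or_lt with rfl | hlt
    · exact Or.inr ⟨hj, hq⟩
    · exact (hnot_lt _ (h _ q hlt (Or.inr le_rfl))).elim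

theorem sum_isUnshuffle_succ {n : ℕ} {M : Type*} [AddCommMonoid M] (j : Fin n)
    (F : Equiv.Perm (Fin (n + 1)) → M) :
    ∑ σ with IsUnshuffle (j + 1) σ, F σ
      = ∑ τ : Equiv.Perm (Fin n) with IsUnshuffle j τ, F (insertZero 0 τ)
        + ∑ τ : Equiv.Perm (Fin n) with IsUnshuffle (j + 1) τ, F (insertZero j.succ τ) := by
  have hnot (σ : Equiv.Perm (Fin (n + 1))) (h : IsUnshuffle (j + 1) σ) :
      ¬σ 0 = 0 ↔ σ j.succ = 0 := by
    refine ⟨fun h0 => ?_, fun hj h0 => Fin.succ_ne_zero j (σ.injective (hj.trans h0.symm))⟩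
    obtain ⟨_, hj⟩ := h.apply_zero_or_apply_eq_zero.resolve_left h0
    exact hj
  rw [← Finset.sum_filter_add_sum_filter_not _ (fun σ : Equiv.Perm (Fin (n + 1)) => σ 0 = 0),
    Finset.filter_filter, Finset.filter_filter,
    Finset.filter_congr fun σ _ => and_congr_right (hnot σ),
    sum_filter_apply_eq_zero, sum_filter_apply_eq_zero]
  have hself (τ : Equiv.Perm (Fin n)) :
      IsUnshuffle (j + 1) (insertZero j.succ τ) ↔ IsUnshuffle (j + 1) τ :=
    isUnshuffle_insertZero_self j.succ τ
  simp only [isUnshuffle_insertZero_zero, hself]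

theorem sum_isUnshuffle_last {n : ℕ} {M : Type*} [AddCommMonoid M]
    (F : Equiv.Perm (Fin (n + 1)) → M) :
    ∑ σ with IsUnshuffle (n + 1) σ, F σ
      = ∑ τ : Equiv.Perm (Fin n) with IsUnshuffle n τ, F (insertZero 0 τ) := by
  have hzero (σ : Equiv.Perm (Fin (n + 1))) (h : IsUnshuffle (n + 1) σ) : σ 0 = 0 :=
    h.apply_zero_or_apply_eq_zero.resolve_right fun ⟨hj, _⟩ => lt_irrefl _ hj
  rw [Finset.filter_congr fun σ _ => (and_iff_left_of_imp (hzero σ)).symm,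
    sum_filter_apply_eq_zero]
  simp only [isUnshuffle_insertZero_zero]

theorem sum_Icc_one_eq_sum_fin {M : Type*} [AddCommMonoid M] (n : ℕ) (f : ℕ → M) :
    ∑ j ∈ Icc 1 n, f j = ∑ j : Fin n, f (j + 1) := by
  rw [Fin.sum_univ_eq_sum_range fun j => f (j + 1), Finset.range_eq_Ico,
    Finset.sum_Ico_add' f 0 n 1]
  rfl

theorem sum_Icc_sum_isUnshuffle_succ {n : ℕ} {M : Type*} [AddCommMonoid M]
    (F : ℕ → Equiv.Perm (Fin (n + 1)) → M) :
    ∑ j ∈ Icc 1 (n + 1), ∑ σ with IsUnshuffle j σ, F j σ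
      = ∑ τ : Equiv.Perm (Fin n) with IsUnshuffle 0 τ, F 1 (insertZero 0 τ)
        + ∑ j : Fin n, ∑ τ : Equiv.Perm (Fin n) with IsUnshuffle (j + 1) τ,
            F (j + 1 + 1) (insertZero 0 τ)
        + ∑ j : Fin n, ∑ τ : Equiv.Perm (Fin n) with IsUnshuffle (j + 1) τ,
            F (j + 1) (insertZero j.succ τ) := by
  rw [sum_Icc_one_eq_sum_fin, Fin.sum_univ_castSucc]
  simp only [Fin.val_castSucc, Fin.val_last, sum_isUnshuffle_succ, sum_isUnshuffle_last,
    Finset.sum_add_distrib]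
  let G (j : ℕ) : M := ∑ τ : Equiv.Perm (Fin n) with IsUnshuffle j τ, F (j + 1) (insertZero 0 τ)
  have hshift : ∑ j : Fin n, G j + G n = G 0 + ∑ j : Fin n, G (j + 1) :=
    (Fin.sum_univ_castSucc fun j : Fin (n + 1) => G j).symm.trans (Fin.sum_univ_succ _)
  rw [add_right_comm]
  exact congrArg (· + _) hshift

theorem isUnshuffle_zero_iff {n : ℕ} {σ : Equiv.Perm (Fin n)} : IsUnshuffle 0 σ ↔ σ = 1 := by
  constructor
  · intro h
    have hmono : StrictMono σ := fun t u htu => h t u htu (Or.inr (Nat.zero_le _))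
    ext t
    exact Fin.coe_orderIso_apply (hmono.orderIsoOfSurjective σ σ.surjective) t
  · rintro rfl t u htu -
    exact htu

/-! ### Sequences and Koszul signs -/

/-- The sequence `x, f 0, f 1, …`. -/
def consSeq {α : Type*} (x : α) (f : ℕ → α) : ℕ → α
  | 0 => x
  | t + 1 => f t

theorem consSeq_apply {α : Type*} (x : α) (f : ℕ → α) (t : ℕ) :
    consSeq x f t = if t = 0 then x else f (t - 1) := by
  cases t <;> rfl

section permV

variable {V : Type} [AddCommGroup V]

theorem permV_one_of_lt {n : ℕ} (v : ℕ → V) {t : ℕ} (ht : t < n) :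
    permV (1 : Equiv.Perm (Fin n)) v t = v t := by
  simp [permV, ht]

theorem permV_insertZero_of_lt {n : ℕ} (p : Fin (n + 1)) (τ : Equiv.Perm (Fin n)) (a : V)
    (v : ℕ → V) {t : ℕ} (ht : t < p) :
    permV (insertZero p τ) (consSeq a v) t = permV τ v t := by
  have hn : t < n := by omega
  have hpos : (⟨t, by omega⟩ : Fin (n + 1)) = p.succAbove ⟨t, hn⟩ := by
    ext; simp [val_succAbove, ht]
  rw [permV, permV, dif_pos hn, dif_pos (by omega), hpos, insertZero_apply_succAbove]
  rfl

theorem permV_insertZero_add {n : ℕ} (p : Fin (n + 1)) (τ : Equiv.Perm (Fin n)) (a : V)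
    (v : ℕ → V) :
    (fun t => permV (insertZero p τ) (consSeq a v) (p + t))
      = consSeq a (fun t => permV τ v (p + t)) := by
  funext t
  rcases t with _ | t
  · simp only [add_zero, permV, dif_pos p.2, Fin.eta, insertZero_apply_self, Fin.val_zero, consSeq]
  by_cases hn : p + t < n
  · have hpos : (⟨p + (t + 1), by omega⟩ : Fin (n + 1)) = p.succAbove ⟨p + t, hn⟩ := by
      ext; simp [val_succAbove, add_assoc]
    rw [permV, dif_pos (by omega), hpos, insertZero_apply_succAbove]
    simp [consSeq, permV, hn]
  · simp [consSeq, permV, hn, ← add_assoc]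

theorem permV_insertZero_zero {n : ℕ} (τ : Equiv.Perm (Fin n)) (a : V) (v : ℕ → V) :
    permV (insertZero 0 τ) (consSeq a v) = consSeq a (permV τ v) := by
  simpa using permV_insertZero_add 0 τ a v

end permV

theorem koszulE_eq_sum {n : ℕ} (σ : Equiv.Perm (Fin n)) (d : ℕ → ℤ) :
    koszulE σ d = ∑ x, ∑ y, if x < y ∧ σ y < σ x then d (σ x) * d (σ y) else 0 := by
  rw [koszulE, Finset.sum_filter, Fintype.sum_prod_type]

theorem koszulE_one {n : ℕ} (d : ℕ → ℤ) : koszulE (1 : Equiv.Perm (Fin n)) d = 0 := by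
  rw [koszulE, Finset.sum_filter]
  refine Finset.sum_eq_zero fun p _ => if_neg fun h => lt_asymm h.1 h.2

theorem koszulE_insertZero {n : ℕ} (p : Fin (n + 1)) (τ : Equiv.Perm (Fin n)) (k : ℤ)
    (d : ℕ → ℤ) :
    koszulE (insertZero p τ) (consSeq k d)
      = k * ∑ t ∈ range p, permV τ d t + koszulE τ d := by
  have hsum : ∑ t ∈ range p, permV τ d t
      = ∑ t : Fin n, if (t : ℕ) < p then d (τ t) else 0 := by
    calc ∑ t ∈ range p, permV τ d t
        = ∑ t ∈ range n, if t < (p : ℕ) then permV τ d t else 0 := by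
          rw [← Finset.sum_filter]
          congr 1
          ext t
          simp only [Finset.mem_filter, Finset.mem_range]
          omega
      _ = ∑ t : Fin n, if (t : ℕ) < p then d (τ t) else 0 := by
          rw [← Fin.sum_univ_eq_sum_range (fun t => if t < (p : ℕ) then permV τ d t else 0)]
          simp [permV]
  rw [koszulE_eq_sum, koszulE_eq_sum, Fin.sum_univ_succAbove _ p, hsum, Finset.mul_sum]
  have hcast (t : Fin n) : t.castSucc < p ↔ (t : ℕ) < p := Iff.rfl
  simp [Fin.sum_univ_succAbove _ p, consSeq, Finset.sum_add_distrib,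
    Fin.succAbove_lt_iff_castSucc_lt, hcast, mul_comm]

theorem koszulE_insertZero_zero {n : ℕ} (τ : Equiv.Perm (Fin n)) (k : ℤ) (d : ℕ → ℤ) :
    koszulE (insertZero 0 τ) (consSeq k d) = koszulE τ d := by
  simp [koszulE_insertZero]

/-! ### Operations and their compositions -/

section Operations

variable {𝕜 V : Type} [Field 𝕜] [AddCommGroup V] [Module 𝕜 V]

variable (𝕜 V) in
/-- Families of multilinear operations on `V`, one of each arity. -/
abbrev Operations : Type := ∀ n : ℕ, MultilinearMap 𝕜 (fun _ : Fin n => V) V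

/-- The value `f_n(v_0, …, v_{n-1})` on the first `n` terms of a sequence. Using sequences as
arguments avoids transporting tuples along equalities of arities. -/
def evalSeq (f : Operations 𝕜 V) (n : ℕ) (v : ℕ → V) : V := f n fun u => v u

theorem evalSeq_congr (f : Operations 𝕜 V) {n : ℕ} {v w : ℕ → V} (h : ∀ t < n, v t = w t) :
    evalSeq f n v = evalSeq f n w :=
  congrArg (f n) (funext fun u => h u u.2)

/-- The operations `f_{n+1}(a, -)` obtained by fixing the first argument; for the brackets of an
`L_∞` algebra this is the inner derivation attached to `a`. -/
def fixFirst (f : Operations 𝕜 V) (a : V) : Operations 𝕜 V := fun n => (f (n + 1)).curryLeft a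

theorem evalSeq_fixFirst (f : Operations 𝕜 V) (a : V) (n : ℕ) (v : ℕ → V) :
    evalSeq (fixFirst f a) n v = evalSeq f (n + 1) (consSeq a v) := by
  refine congrArg (f (n + 1)) (funext fun u => ?_)
  cases u using Fin.cases <;> rfl

/-- The family `f` is homogeneous of degree `r` for the grading `ℬ`. -/
def HasDegree (ℬ : ℤ → Submodule 𝕜 V) (r : ℤ) (f : Operations 𝕜 V) : Prop :=
  ∀ n : ℕ, 1 ≤ n → ∀ (d : Fin n → ℤ) (v : Fin n → V), (∀ j, v j ∈ ℬ (d j)) →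
    f n v ∈ ℬ (r + ∑ j, d j)

/-- The nested operation `g_{n-j+1}(f_j(w_0, …, w_{j-1}), w_j, …, w_{n-1})`. -/
def nestedEval (g f : Operations 𝕜 V) (n j : ℕ) (w : ℕ → V) : V :=
  evalSeq g (n - j + 1) (consSeq (evalSeq f j w) fun t => w (j + t))

/-- The composition `g ∘ f` of families of operations, summed over unshuffles with Koszul signs,
on homogeneous elements `v` of degrees `d`. Thus `l ∘ l = 0` are the higher Jacobi relations. -/
def unshuffleComp (g f : Operations 𝕜 V) (n : ℕ) (d : ℕ → ℤ) (v : ℕ → V) : V :=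
  ∑ j ∈ Icc 1 n, ∑ σ : Equiv.Perm (Fin n) with IsUnshuffle j σ,
    (-1 : 𝕜) ^ koszulE σ d • nestedEval g f n j (permV σ v)

/-- A strong homotopy derivation `θ` of degree `r` of the operations `l`. -/
structure IsStrongHomotopyDerivation (ℬ : ℤ → Submodule 𝕜 V) (l : Operations 𝕜 V) (r : ℤ)
    (θ : Operations 𝕜 V) : Prop where
  hasDegree : HasDegree ℬ r θ
  gradedSymm : GradedSymm 𝕜 ℬ θ
  leibniz : ∀ (n : ℕ) (d : ℕ → ℤ) (v : ℕ → V), (∀ t, v t ∈ ℬ (d t)) →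
    unshuffleComp θ l n d v - (-1 : 𝕜) ^ r • unshuffleComp l θ n d v = 0

variable {ℬ : ℤ → Submodule 𝕜 V} {f g l : Operations 𝕜 V} {r k : ℤ} {a : V} {d : ℕ → ℤ}
  {v : ℕ → V}

theorem consSeq_mem (ha : a ∈ ℬ k) (hv : ∀ t, v t ∈ ℬ (d t)) :
    ∀ t, consSeq a v t ∈ ℬ (consSeq k d t)
  | 0 => ha
  | t + 1 => hv t

theorem permV_mem {n : ℕ} (σ : Equiv.Perm (Fin n)) (hv : ∀ t, v t ∈ ℬ (d t)) (t : ℕ) :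
    permV σ v t ∈ ℬ (permV σ d t) := by
  rw [permV, permV]
  split_ifs
  · exact hv _
  · exact zero_mem _

theorem HasDegree.evalSeq_mem (hf : HasDegree ℬ r f) {n : ℕ} (hn : 1 ≤ n)
    (hv : ∀ t, v t ∈ ℬ (d t)) : evalSeq f n v ∈ ℬ (r + ∑ t ∈ range n, d t) := by
  rw [← Fin.sum_univ_eq_sum_range]
  exact hf n hn _ _ fun u => hv u

theorem HasDegree.fixFirst (hf : HasDegree ℬ r f) (ha : a ∈ ℬ k) :
    HasDegree ℬ (k + r) (fixFirst f a) := by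
  intro n _ d v hv
  have hmem := hf (n + 1) (by omega) (Fin.cons k d) (Fin.cons a v)
    (Fin.cases ha fun u => by simpa using hv u)
  rwa [Fin.sum_cons, ← add_assoc, add_comm r k] at hmem

theorem evalSeq_consSeq_swap (hg : GradedSymm 𝕜 ℬ g) {p q : ℤ} {x y : V} (hx : x ∈ ℬ p)
    (hy : y ∈ ℬ q) (hv : ∀ t, v t ∈ ℬ (d t)) (n : ℕ) :
    evalSeq g (n + 2) (consSeq x (consSeq y v))
      = (-1 : 𝕜) ^ (q * p) • evalSeq g (n + 2) (consSeq y (consSeq x v)) := by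
  refine Eq.trans (congrArg (g (n + 2)) (funext fun u => ?_))
    (hg (n + 2) _ _ (consSeq_mem hy (consSeq_mem hx hv)) 0 (by omega))
  rcases u with ⟨_ | _ | u, hu⟩ <;> rfl

theorem GradedSymm.fixFirst (hf : GradedSymm 𝕜 ℬ f) (ha : a ∈ ℬ k) :
    GradedSymm 𝕜 ℬ (fixFirst f a) := by
  intro n d v hv t ht
  have hswap := hf (n + 1) _ _ (consSeq_mem ha hv) (t + 1) (by omega)
  refine Eq.trans ?_ (hswap.trans (congrArg _ (evalSeq_fixFirst f a n v).symm))
  refine congrArg (f (n + 1)) (funext fun u => ?_)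
  cases u using Fin.cases <;> simp [consSeq]

theorem nestedEval_permV_insertZero_zero {n : ℕ} (g f : Operations 𝕜 V) (j : ℕ)
    (τ : Equiv.Perm (Fin n)) (a : V) (v : ℕ → V) :
    nestedEval g f (n + 1) (j + 1) (permV (insertZero 0 τ) (consSeq a v))
      = nestedEval g (fixFirst f a) n j (permV τ v) := by
  simp only [nestedEval, permV_insertZero_zero, evalSeq_fixFirst, Nat.add_sub_add_right,
    add_right_comm j 1, consSeq]

theorem nestedEval_permV_insertZero_self (hg : GradedSymm 𝕜 ℬ g) (hf : HasDegree ℬ r f)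
    (ha : a ∈ ℬ k) (hv : ∀ t, v t ∈ ℬ (d t)) {n : ℕ} {p : Fin (n + 1)} (hp : 1 ≤ (p : ℕ))
    (τ : Equiv.Perm (Fin n)) :
    nestedEval g f (n + 1) p (permV (insertZero p τ) (consSeq a v))
      = (-1 : 𝕜) ^ (k * (r + ∑ t ∈ range p, permV τ d t))
          • nestedEval (fixFirst g a) f n p (permV τ v) := by
  have harity : n + 1 - p + 1 = n - p + 2 := by omega
  rw [nestedEval, permV_insertZero_add,
    evalSeq_congr f fun t ht => permV_insertZero_of_lt p τ a v ht, harity,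
    evalSeq_consSeq_swap hg (hf.evalSeq_mem hp (permV_mem τ hv)) ha
      fun t => permV_mem τ hv (p + t),
    nestedEval, evalSeq_fixFirst]

theorem nestedEval_eq_apply_ite (g f : Operations 𝕜 V) (n j : ℕ) (w : ℕ → V) :
    nestedEval g f n j w = g (n - j + 1) (fun u => if (u : ℕ) = 0 then f j (fun t => w t)
      else w (j + (u : ℕ) - 1)) := by
  refine congrArg (g (n - j + 1)) (funext fun u => ?_)
  rcases u with ⟨_ | u, hu⟩ <;> rfl

theorem nestedEval_fixFirst_eq_apply_ite (g f : Operations 𝕜 V) (a : V) (n j : ℕ) (w : ℕ → V) :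
    nestedEval (fixFirst g a) f n j w = g (n - j + 2) (fun u => if (u : ℕ) = 0 then a
      else if (u : ℕ) = 1 then f j (fun t => w t) else w (j + (u : ℕ) - 2)) := by
  rw [nestedEval, evalSeq_fixFirst]
  refine congrArg (g (n - j + 2)) (funext fun u => ?_)
  rcases u with ⟨_ | _ | u, hu⟩ <;> rfl

theorem fixFirst_apply_eq_apply_ite (f : Operations 𝕜 V) (a : V) (n : ℕ) (w : ℕ → V) :
    fixFirst f a n (fun t => w t)
      = f (n + 1) (fun t => if (t : ℕ) = 0 then a else w ((t : ℕ) - 1)) := by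
  refine (evalSeq_fixFirst f a n w).trans (congrArg (f (n + 1)) (funext fun t => ?_))
  exact consSeq_apply a w t

theorem unshuffleComp_fixFirst_sub_smul_eq_sum (g f : Operations 𝕜 V) (a : V) (r : ℤ) (n : ℕ)
    (d : ℕ → ℤ) (v : ℕ → V) :
    unshuffleComp (fixFirst g a) f n d v - (-1 : 𝕜) ^ r • unshuffleComp g (fixFirst f a) n d v
      = ∑ j ∈ Icc 1 n, ∑ σ : Equiv.Perm (Fin n) with IsUnshuffle j σ,
          ((-1 : 𝕜) ^ koszulE σ d • g (n - j + 2) (fun u => if (u : ℕ) = 0 then a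
              else if (u : ℕ) = 1 then f j (fun w => permV σ v w)
              else permV σ v (j + (u : ℕ) - 2))
            - (-1 : 𝕜) ^ (r + koszulE σ d) • g (n - j + 1) (fun u => if (u : ℕ) = 0 then
                f (j + 1) (fun w => if (w : ℕ) = 0 then a else permV σ v ((w : ℕ) - 1))
              else permV σ v (j + (u : ℕ) - 1))) := by
  simp only [unshuffleComp, nestedEval_fixFirst_eq_apply_ite, nestedEval_eq_apply_ite g,
    fixFirst_apply_eq_apply_ite, Finset.smul_sum, smul_smul, ← Finset.sum_sub_distrib,
    ← zpow_add₀ (neg_ne_zero.mpr (one_ne_zero (α := 𝕜)))]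

theorem unshuffleComp_eq_zero (hl : LInftyRel 𝕜 ℬ l) {n : ℕ} (hn : 1 ≤ n)
    (hv : ∀ t, v t ∈ ℬ (d t)) : unshuffleComp l l n d v = 0 := by
  simp only [unshuffleComp, nestedEval_eq_apply_ite]
  exact hl n hn d v hv

theorem evalSeq_consSeq_zero (f : Operations 𝕜 V) (n : ℕ) (v : ℕ → V) :
    evalSeq f (n + 1) (consSeq 0 v) = 0 :=
  (f (n + 1)).map_coord_zero 0 rfl

theorem nestedEval_zero_permV_one (g f : Operations 𝕜 V) (n : ℕ) (v : ℕ → V) :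
    nestedEval g f n 0 (permV (1 : Equiv.Perm (Fin n)) v)
      = evalSeq g (n + 1) (consSeq (evalSeq f 0 v) v) := by
  rw [nestedEval, evalSeq_congr f (w := v) fun t ht => absurd ht (Nat.not_lt_zero t)]
  refine evalSeq_congr g fun t ht => ?_
  rcases t with _ | t
  · rfl
  · simpa [consSeq] using permV_one_of_lt v (by omega)

theorem unshuffleComp_consSeq (hg : GradedSymm 𝕜 ℬ g) (hf : HasDegree ℬ r f) (ha : a ∈ ℬ k)
    (n : ℕ) (hv : ∀ t, v t ∈ ℬ (d t)) :
    unshuffleComp g f (n + 1) (consSeq k d) (consSeq a v)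
      = evalSeq g (n + 1) (consSeq (f 1 fun _ => a) v)
        + unshuffleComp g (fixFirst f a) n d v
        + (-1 : 𝕜) ^ (k * r) • unshuffleComp (fixFirst g a) f n d v := by
  rw [unshuffleComp, sum_Icc_sum_isUnshuffle_succ]
  congr 2
  · have hone : f 1 (fun _ => a) = evalSeq (fixFirst f a) 0 v := by
      rw [evalSeq_fixFirst]
      exact congrArg (f 1) (funext fun u => by rw [Fin.fin_one_eq_zero u]; rfl)
    simp only [isUnshuffle_zero_iff, Finset.filter_eq', Finset.mem_univ, if_true,
      Finset.sum_singleton]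
    rw [koszulE_insertZero_zero, koszulE_one, zpow_zero, one_smul, hone,
      nestedEval_permV_insertZero_zero g f 0, nestedEval_zero_permV_one]
  · rw [unshuffleComp, sum_Icc_one_eq_sum_fin]
    simp only [koszulE_insertZero_zero, nestedEval_permV_insertZero_zero]
  · rw [unshuffleComp, sum_Icc_one_eq_sum_fin]
    have hne : (-1 : 𝕜) ≠ 0 := neg_ne_zero.mpr one_ne_zero
    simp only [Finset.smul_sum]
    refine Finset.sum_congr rfl fun j _ => Finset.sum_congr rfl fun τ _ => ?_
    have hnested := nestedEval_permV_insertZero_self hg hf ha hv (p := j.succ) (by simp) τ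
    rw [Fin.val_succ] at hnested
    rw [hnested, koszulE_insertZero, smul_smul, smul_smul]
    have hexp (E S : ℤ) : k * S + E + k * (r + S) = k * r + E + 2 * (k * S) := by ring
    rw [← zpow_add₀ hne, ← zpow_add₀ hne, Fin.val_succ, hexp, zpow_add₀ hne,
      (even_two_mul _).neg_one_zpow, mul_one]

end Operations

end Stmt10

open Stmt10 in
theorem statement10_general {𝕜 V : Type} [Field 𝕜] [AddCommGroup V] [Module 𝕜 V]
    {ℬ : ℤ → Submodule 𝕜 V} {l : Operations 𝕜 V} (hldeg : HasDegree ℬ 1 l)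
    (hlsym : GradedSymm 𝕜 ℬ l) (hlrel : LInftyRel 𝕜 ℬ l) {k : ℤ} {a : V} (ha : a ∈ ℬ k)
    (hla : l 1 (fun _ => a) = 0) :
    IsStrongHomotopyDerivation ℬ l (k + 1) (fixFirst l a) where
  hasDegree := hldeg.fixFirst ha
  gradedSymm := hlsym.fixFirst ha
  leibniz n d v hv := by
    have hjacobi := unshuffleComp_eq_zero hlrel (n := n + 1) (by omega) (consSeq_mem ha hv)
    rw [unshuffleComp_consSeq hlsym hldeg ha n hv, hla, evalSeq_consSeq_zero, zero_add,
      mul_one] at hjacobi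
    have hsign : (-1 : 𝕜) ^ (k + 1) * (-1) ^ k = -1 := by
      rw [← zpow_add₀ (neg_ne_zero.mpr one_ne_zero), show k + 1 + k = 2 * k + 1 by ring]
      exact (odd_two_mul_add_one k).neg_one_zpow
    rw [eq_neg_of_add_eq_zero_left hjacobi, smul_neg, smul_smul, hsign, neg_one_smul, neg_neg,
      sub_self]

open Stmt10 in
/-- Let `(V,{l_n})` be an `L_∞` algebra over a field of characteristic
`0` and `a ∈ V` homogeneous of degree `k` with `l₁(a) = 0`.  Then the maps
`θ_n(v₁,…,vₙ) := l_{n+1}(a,v₁,…,vₙ)` form a strong homotopy derivation of degree `k+1`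
of `(V,{l_n})`:  they are homogeneous of degree `k+1` and satisfy the strong homotopy
derivation relations. -/
theorem statement10 {𝕜 V : Type} [Field 𝕜] [CharZero 𝕜] [AddCommGroup V] [Module 𝕜 V]
    (ℬ : ℤ → Submodule 𝕜 V) (hgr : DirectSum.IsInternal ℬ)
    (l : ∀ n : ℕ, MultilinearMap 𝕜 (fun _ : Fin n => V) V)
    (hldeg : ∀ n : ℕ, 1 ≤ n → ∀ (d : Fin n → ℤ) (v : Fin n → V), (∀ j, v j ∈ ℬ (d j)) →
        l n v ∈ ℬ (1 + ∑ j, d j))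
    (hlsym : GradedSymm 𝕜 ℬ l)
    (hlrel : LInftyRel 𝕜 ℬ l)
    (k : ℤ) (a : V) (ha : a ∈ ℬ k) (hla : l 1 (fun _ => a) = 0) :
    (∀ (n : ℕ), 1 ≤ n → ∀ (d : ℕ → ℤ) (v : ℕ → V), (∀ t, v t ∈ ℬ (d t)) →
        l (n + 1) (fun u => if (u : ℕ) = 0 then a else v ((u : ℕ) - 1))
          ∈ ℬ ((k + 1) + ∑ t ∈ Finset.range n, d t)) ∧
    (∀ (n : ℕ), 1 ≤ n → ∀ (d : ℕ → ℤ) (v : ℕ → V), (∀ t, v t ∈ ℬ (d t)) →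
      ∑ j ∈ Finset.Icc 1 n,
        ∑ σ ∈ Finset.univ.filter (fun σ : Equiv.Perm (Fin n) => IsUnshuffle j σ),
          ( ((-1 : 𝕜) ^ koszulE σ d) •
              l (n - j + 2) (fun u => if (u : ℕ) = 0 then a
                else if (u : ℕ) = 1 then l j (fun w => permV σ v (w : ℕ))
                else permV σ v (j + (u : ℕ) - 2))
            - ((-1 : 𝕜) ^ ((k + 1) + koszulE σ d)) •
              l (n - j + 1) (fun u => if (u : ℕ) = 0 then
                  l (j + 1) (fun w => if (w : ℕ) = 0 then a
                    else permV σ v ((w : ℕ) - 1))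
                else permV σ v (j + (u : ℕ) - 1)) )
        = 0) := by
  have hθ := statement10_general hldeg hlsym hlrel ha hla
  exact ⟨fun n hn d v hv => fixFirst_apply_eq_apply_ite l a n v ▸ hθ.hasDegree.evalSeq_mem hn hv,
    fun n _ d v hv => unshuffleComp_fixFirst_sub_smul_eq_sum l l a _ n d v ▸ hθ.leibniz n d v hv⟩
end
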